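/- For every k ≥ 1 and all unary relations U₁,...,U_k ⊆ ℕ, there exists a strict linear order ◁' on ℕ such that the relation ◁ and each of the relations U₁,...,U_k are FO(<,◁')-definable in every finite prefix. Moreover, if each Uᵢ is FO(Bit)-definable in every finite prefix, then ◁' can be chosen to be FO(Bit)-definable in every finite prefix. -/

import Mathlib

open FirstOrder Language

/-- `q_i = i(i+1)/2`, the smallest element of column `i`. -/
def qseq (i : ℕ) : ℕ := i * (i + 1) / 2

/-- `c(x)`, the column number of `x`: the largest `i` with `q_i ≤ x`. -/
def col (x : ℕ) : ℕ := Nat.findGreatest (fun i => qseq i ≤ x) x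

/-- `q(x) = q_{c(x)}`, the bottom-most element of the column of `x`. -/
def qf (x : ℕ) : ℕ := qseq (col x)

/-- `r(x) = x - q(x)`, the row number of `x`. -/
def rowf (x : ℕ) : ℕ := x - qf x

/-- The row-major linear order `◁`. -/
def ordc (x y : ℕ) : Prop := rowf x < rowf y ∨ (rowf x = rowf y ∧ col x < col y)

/-- Relation symbols of the language with a single binary relation `Bit`. -/
inductive BitRel : ℕ → Type
  | bit : BitRel 2

/-- The language with a single binary relation symbol for `Bit`. -/
def LBit : Language := ⟨fun _ => Empty, BitRel⟩

/-- The finite prefix structure `({0,...,n}, Bit)`. -/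
def bitStruct (n : ℕ) : LBit.Structure (Fin (n + 1)) where
  funMap := fun f _ => f.elim
  RelMap := fun r v =>
    match r with
    | .bit => Nat.testBit (v 0 : ℕ) (v 1 : ℕ) = true

/-- Relation symbols of a language with two binary relation symbols. -/
inductive RelPair : ℕ → Type
  | lt : RelPair 2
  | snd : RelPair 2

/-- A language with two binary relation symbols: one for `<` and one further one. -/
def LPair : Language := ⟨fun _ => Empty, RelPair⟩

/-- The finite prefix structure `({0,...,n}, <, R)`, interpreting the first symbol by
the standard order `<` and the second one by the binary relation `R`. -/
def pairStruct (R : ℕ → ℕ → Prop) (n : ℕ) : LPair.Structure (Fin (n + 1)) where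
  funMap := fun f _ => f.elim
  RelMap := fun r v =>
    match r with
    | .lt => (v 0 : ℕ) < (v 1 : ℕ)
    | .snd => R (v 0 : ℕ) (v 1 : ℕ)


/-- Definability of a family of relations in the prefix structures `S n`. Values are naturals `≤ n`. -/
def Dfn {L : FirstOrder.Language.{0, 0}} (S : ∀ n, L.Structure (Fin (n + 1))) {α : Type}
    (P : ℕ → (α → ℕ) → Prop) : Prop :=
  ∃ φ : L.Formula α, ∀ (n : ℕ) (v : α → Fin (n + 1)),
    (@Formula.Realize L (Fin (n + 1)) (S n) α φ v ↔ P n (fun a => (v a : ℕ)))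

namespace Dfn

section basic
variable {L : FirstOrder.Language.{0, 0}} {S : ∀ n, L.Structure (Fin (n + 1))} {α β : Type}

theorem congr {P Q : ℕ → (α → ℕ) → Prop} (h : Dfn S P)
    (e : ∀ n v, (∀ a, v a ≤ n) → (Q n v ↔ P n v)) : Dfn S Q := by
  obtain ⟨φ, hφ⟩ := h
  exact ⟨φ, fun n v => (hφ n v).trans (e n _ (fun a => Nat.lt_succ_iff.mp (v a).2)).symm⟩

theorem rename {P : ℕ → (β → ℕ) → Prop} (h : Dfn S P) (f : β → α) :
    Dfn S (fun n v => P n (fun b => v (f b))) := by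
  obtain ⟨φ, hφ⟩ := h
  refine ⟨φ.relabel f, fun n v => ?_⟩
  let := S n
  rw [Formula.realize_relabel]
  exact hφ n _

theorem not {P : ℕ → (α → ℕ) → Prop} (h : Dfn S P) : Dfn S (fun n v => ¬ P n v) := by
  obtain ⟨φ, hφ⟩ := h
  refine ⟨∼φ, fun n v => ?_⟩
  let := S n
  rw [Formula.realize_not]
  exact not_congr (hφ n v)

theorem and {P Q : ℕ → (α → ℕ) → Prop} (h : Dfn S P) (h' : Dfn S Q) :
    Dfn S (fun n v => P n v ∧ Q n v) := by
  obtain ⟨φ, hφ⟩ := h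
  obtain ⟨ψ, hψ⟩ := h'
  refine ⟨φ ⊓ ψ, fun n v => ?_⟩
  let := S n
  rw [Formula.realize_inf]
  exact and_congr (hφ n v) (hψ n v)

theorem or {P Q : ℕ → (α → ℕ) → Prop} (h : Dfn S P) (h' : Dfn S Q) :
    Dfn S (fun n v => P n v ∨ Q n v) :=
  (h.not.and h'.not).not.congr (fun n v _ => by tauto)

theorem imp {P Q : ℕ → (α → ℕ) → Prop} (h : Dfn S P) (h' : Dfn S Q) :
    Dfn S (fun n v => P n v → Q n v) :=
  (h.and h'.not).not.congr (fun n v _ => by tauto)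

theorem iff {P Q : ℕ → (α → ℕ) → Prop} (h : Dfn S P) (h' : Dfn S Q) :
    Dfn S (fun n v => P n v ↔ Q n v) :=
  ((h.imp h').and (h'.imp h)).congr (fun n v _ => by tauto)

theorem ex {P : ℕ → (α → ℕ) → ℕ → Prop}
    (h : Dfn S (α := Option α) (fun n w => P n (fun a => w (some a)) (w none))) :
    Dfn S (fun n v => ∃ z, z ≤ n ∧ P n v z) := by
  obtain ⟨φ, hφ⟩ := h
  refine ⟨(φ.relabel (fun o : Option α => (o.elim (Sum.inr ()) Sum.inl : α ⊕ Unit))).iExs Unit,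
    fun n v => ?_⟩
  let := S n
  rw [Formula.realize_iExs]
  constructor
  · rintro ⟨i, hi⟩
    rw [Formula.realize_relabel] at hi
    exact ⟨i (), Nat.lt_succ_iff.mp (i ()).2, (hφ n _).1 hi⟩
  · rintro ⟨z, hz, hP⟩
    refine ⟨fun _ => ⟨z, Nat.lt_succ_iff.mpr hz⟩, ?_⟩
    rw [Formula.realize_relabel]
    exact (hφ n _).2 hP

theorem all {P : ℕ → (α → ℕ) → ℕ → Prop}
    (h : Dfn S (α := Option α) (fun n w => P n (fun a => w (some a)) (w none))) :
    Dfn S (fun n v => ∀ z, z ≤ n → P n v z) :=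
  (ex (P := fun n v z => ¬ P n v z) h.not).not.congr (fun n v _ => by push Not; rfl)

theorem eq (a b : α) : Dfn S (fun _ v => v a = v b) := by
  refine ⟨(Term.var a).equal (Term.var b), fun n v => ?_⟩
  let := S n
  rw [Formula.realize_equal]
  simp [Fin.ext_iff]

theorem rel (R : L.Relations 2) (a b : α) (Q : ℕ → ℕ → ℕ → Prop)
    (hQ : ∀ n (w : Fin 2 → Fin (n + 1)), @Structure.RelMap L _ (S n) 2 R w ↔ Q n (w 0) (w 1)) :
    Dfn S (fun n v => Q n (v a) (v b)) := by
  refine ⟨R.formula₂ (Term.var a) (Term.var b), fun n v => ?_⟩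
  let := S n
  rw [Formula.realize_rel₂]
  exact hQ n _

theorem exFin {ι : Type} [Finite ι] {P : ι → ℕ → (α → ℕ) → Prop} (h : ∀ i, Dfn S (P i)) :
    Dfn S (fun n v => ∃ i, P i n v) := by
  choose φ hφ using h
  refine ⟨BoundedFormula.iSup φ, fun n v => ?_⟩
  let := S n
  rw [Formula.Realize, BoundedFormula.realize_iSup]
  exact exists_congr (fun i => hφ i n v)

theorem allFin {ι : Type} [Finite ι] {P : ι → ℕ → (α → ℕ) → Prop} (h : ∀ i, Dfn S (P i)) :
    Dfn S (fun n v => ∀ i, P i n v) :=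
  (exFin (fun i => (h i).not)).not.congr (fun n v _ => by push Not; rfl)

theorem tru : Dfn S (fun _ (_ : α → ℕ) => True) :=
  (exFin (ι := Empty) (P := fun _ _ _ => True) (fun i => i.elim)).not.congr (fun n v _ => by simp)

theorem const (p : Prop) : Dfn S (fun _ (_ : α → ℕ) => p) := by
  by_cases hp : p
  · exact tru.congr (fun _ _ _ => by simp [hp])
  · exact tru.not.congr (fun _ _ _ => by simp [hp])

/-- bounded finite disjunction -/
theorem exLt (N : ℕ) {P : ℕ → ℕ → (α → ℕ) → Prop} (h : ∀ i, Dfn S (P i)) :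
    Dfn S (fun n v => ∃ i, i < N ∧ P i n v) :=
  (exFin (ι := Fin N) (P := fun i => P i) (fun i => h i)).congr (fun n v _ =>
    ⟨fun ⟨i, hi, h⟩ => ⟨⟨i, hi⟩, h⟩, fun ⟨i, h⟩ => ⟨i, i.2, h⟩⟩)

end basic

section order
variable {L : FirstOrder.Language.{0, 0}} {S : ∀ n, L.Structure (Fin (n + 1))}
  (hlt : ∀ {α : Type} (a b : α), Dfn S (fun _ v => v a < v b))
variable {α : Type}
include hlt

theorem le (a b : α) : Dfn S (fun _ v => v a ≤ v b) :=
  (hlt b a).not.congr (fun _ _ _ => by simp)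

theorem eqc (a : α) (c : ℕ) : Dfn S (fun _ v => v a = c) := by
  induction c using Nat.strong_induction_on generalizing α with
  | _ c ih =>
    have h1 : Dfn S (fun n v => (∀ i : Fin c, v a ≠ i) ∧
        ∀ z, z ≤ n → z < v a → ∃ i : Fin c, z = i) := by
      refine and (allFin fun i => (ih i i.2 a).not) (all (imp (hlt _ _) (exFin fun i => ih i i.2 _)))
    refine h1.congr (fun n v hv => ⟨?_, ?_⟩)
    · intro h
      refine ⟨fun i => by have := i.2; omega, fun z _ hz => ⟨⟨z, by omega⟩, rfl⟩⟩
    · rintro ⟨h1, h2⟩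
      have h3 : c ≤ v a := by
        by_contra hc
        exact h1 ⟨v a, by omega⟩ rfl
      by_contra hne
      obtain ⟨i, hi⟩ := h2 c (by have := hv a; omega) (by omega)
      have := i.2
      omega

theorem addc (a b : α) (c : ℕ) : Dfn S (fun _ v => v a + c = v b) := by
  induction c generalizing α with
  | zero => exact eq a b
  | succ c ih =>
    have h1 : Dfn S (fun n v => ∃ z, z ≤ n ∧ (v a + c = z ∧ z < v b ∧
        ¬ ∃ w, w ≤ n ∧ (z < w ∧ w < v b))) :=
      ex (and (ih _ _) (and (hlt _ _) (not (ex (and (hlt _ _) (hlt _ _))))))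
    refine h1.congr (fun n v hv => ⟨?_, ?_⟩)
    · intro h
      have := hv b
      refine ⟨v a + c, by omega, rfl, by omega, ?_⟩
      rintro ⟨w, _, h1, h2⟩
      omega
    · rintro ⟨z, hz, h1, h2, h3⟩
      by_contra hne
      have := hv b
      exact h3 ⟨z + 1, by omega, by omega, by omega⟩

theorem univ (c : ℕ) : Dfn S (fun n (_ : α → ℕ) => n = c) := by
  have h1 : Dfn S (fun n (_ : α → ℕ) => ∃ z, z ≤ n ∧ (z = c ∧ ∀ w, w ≤ n → w ≤ z)) :=
    ex (and (eqc hlt _ _) (all (le hlt _ _)))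
  refine h1.congr (fun n v hv => ⟨?_, ?_⟩)
  · intro h
    exact ⟨n, le_rfl, h, fun w hw => hw⟩
  · rintro ⟨z, hz, h1, h2⟩
    have := h2 n le_rfl
    omega

/-- it suffices to be correct on all large prefixes -/
theorem eventually {k : ℕ} {P Q : ℕ → (Fin k → ℕ) → Prop} (N : ℕ) (h : Dfn S Q)
    (e : ∀ n v, N ≤ n → (∀ a, v a ≤ n) → (P n v ↔ Q n v)) : Dfn S P := by
  have h1 : Dfn S (fun n v => ((∀ i : Fin N, ¬ n = i) ∧ Q n v) ∨
      ∃ i : Fin N, n = i ∧ ∃ w : Fin k → Fin N, P i (fun a => w a) ∧ ∀ a, v a = w a) :=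
    or (and (allFin fun i => (univ hlt _).not) h)
      (exFin fun i => and (univ hlt _) (exFin fun w => and (const _)
        (allFin fun a => eqc hlt _ _)))
  refine h1.congr (fun n v hv => ?_)
  by_cases hn : N ≤ n
  · rw [e n v hn hv]
    constructor
    · intro h
      refine Or.inl ⟨fun i => ?_, h⟩
      have := i.2
      omega
    · rintro (h | ⟨i, hi, _⟩)
      · exact h.2
      · have := i.2
        omega
  · constructor
    · intro h
      refine Or.inr ⟨⟨n, by omega⟩, rfl, fun a => ⟨v a, by have := hv a; omega⟩, h, fun a => rfl⟩
    · rintro (h | ⟨i, hi, w, hw, hvw⟩)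
      · exact absurd rfl (h.1 ⟨n, by omega⟩)
      · subst hi
        have : v = fun a => (w a : ℕ) := funext hvw
        rw [this]
        exact hw

theorem small (a : α) (N : ℕ) (Q : ℕ → Prop) : Dfn S (fun _ v => v a < N ∧ Q (v a)) :=
  (exLt N (P := fun i _ v => v a = i ∧ Q i) (fun i => and (eqc hlt a i) (const (Q i)))).congr
    (fun n v _ => ⟨fun h => ⟨v a, h.1, rfl, h.2⟩, fun ⟨i, hi, h1, h2⟩ => by subst h1; exact ⟨hi, h2⟩⟩)

theorem smallf (a b : α) (N : ℕ) (f : ℕ → ℕ) : Dfn S (fun _ v => v a < N ∧ v b = f (v a)) :=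
  (exLt N (P := fun i _ v => v a = i ∧ v b = f i)
      (fun i => and (eqc hlt a i) (eqc hlt b (f i)))).congr
    (fun n v _ => ⟨fun h => ⟨v a, h.1, rfl, h.2⟩, fun ⟨i, hi, h1, h2⟩ => by subst h1; exact ⟨hi, h2⟩⟩)

theorem ltc (a : α) (N : ℕ) : Dfn S (fun _ v => v a < N) :=
  (small hlt a N (fun _ => True)).congr (fun _ _ _ => by simp)

/-- definability by a lookup for small values and a formula for large ones -/
theorem piece (a : α) (N : ℕ) {P Q : ℕ → (α → ℕ) → Prop} {R : ℕ → ℕ → (α → ℕ) → Prop}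
    (hQ : Dfn S Q) (hR : ∀ i, Dfn S (R i))
    (h1 : ∀ n v, (∀ a, v a ≤ n) → N ≤ v a → (P n v ↔ Q n v))
    (h2 : ∀ n v, (∀ a, v a ≤ n) → v a < N → (P n v ↔ R (v a) n v)) : Dfn S P := by
  have h : Dfn S (fun n v => (¬ v a < N ∧ Q n v) ∨ ∃ i, i < N ∧ (v a = i ∧ R i n v)) :=
    or (and (ltc hlt _ _).not hQ) (exLt N fun i => and (eqc hlt _ _) (hR i))
  refine h.congr (fun n v hv => ?_)
  by_cases hN : v a < N
  · rw [h2 n v hv hN]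
    constructor
    · intro h
      exact Or.inr ⟨_, hN, rfl, h⟩
    · rintro (h | ⟨i, hi, h1, h2⟩)
      · exact absurd hN h.1
      · subst h1
        exact h2
  · rw [h1 n v hv (by omega)]
    constructor
    · intro h
      exact Or.inl ⟨hN, h⟩
    · rintro (h | ⟨i, hi, h1, h2⟩)
      · exact h.2
      · omega

end order
end Dfn

/-! ### The grid -/

theorem qseq_succ (i : ℕ) : qseq (i + 1) = qseq i + i + 1 := by
  have h1 : (i + 1) * (i + 1 + 1) = i * (i + 1) + 2 * (i + 1) := by ring
  unfold qseq
  omega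

theorem qseq_mono {i j : ℕ} (h : i ≤ j) : qseq i ≤ qseq j := by
  induction h with
  | refl => exact le_rfl
  | step _ ih => rw [qseq_succ]; omega

theorem le_qseq (i : ℕ) : i ≤ qseq i := by
  induction i with
  | zero => simp
  | succ i ih => rw [qseq_succ]; omega

theorem qseq_col_le (x : ℕ) : qseq (col x) ≤ x :=
  Nat.findGreatest_spec (P := fun i => qseq i ≤ x) (m := 0) (Nat.zero_le _) (by simp [qseq])

theorem lt_qseq_col (x : ℕ) : x < qseq (col x + 1) := by
  by_contra h
  push Not at h
  have h1 : col x + 1 ≤ col x :=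
    Nat.le_findGreatest (P := fun i => qseq i ≤ x) (le_trans (le_qseq _) h) h
  omega

theorem grid_eq (x : ℕ) : x = qseq (col x) + rowf x := by
  have := qseq_col_le x
  unfold rowf qf
  omega

theorem row_le_col (x : ℕ) : rowf x ≤ col x := by
  have h1 := lt_qseq_col x
  have h2 := grid_eq x
  rw [qseq_succ] at h1
  omega

theorem col_eq_of {x c r : ℕ} (hx : x = qseq c + r) (h : r ≤ c) : col x = c := by
  have h1 := lt_qseq_col x
  have h2 := qseq_col_le x
  have h4 := qseq_succ c
  rcases lt_trichotomy (col x) c with h3 | h3 | h3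
  · have := qseq_mono (show col x + 1 ≤ c by omega)
    omega
  · exact h3
  · have := qseq_mono (show c + 1 ≤ col x by omega)
    omega

theorem row_eq_of {x c r : ℕ} (hx : x = qseq c + r) (h : r ≤ c) : rowf x = r := by
  have h1 := col_eq_of hx h
  have h2 := grid_eq x
  rw [h1] at h2
  omega

theorem col_mono {x y : ℕ} (h : x ≤ y) : col x ≤ col y := by
  by_contra hc
  have h1 := qseq_mono (show col y + 1 ≤ col x by omega)
  have h2 := lt_qseq_col y
  have h3 := qseq_col_le x
  omega

theorem le_col_iff {x c : ℕ} : c ≤ col x ↔ qseq c ≤ x := by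
  constructor
  · intro h
    exact le_trans (qseq_mono h) (qseq_col_le x)
  · intro h
    have := col_mono h
    rwa [col_eq_of (x := qseq c) (c := c) (r := 0) rfl (Nat.zero_le _)] at this

theorem eq_of_grid {x y : ℕ} (h1 : col x = col y) (h2 : rowf x = rowf y) : x = y := by
  rw [grid_eq x, grid_eq y, h1, h2]

theorem row_lt_of_col_eq {x y : ℕ} (h1 : col x = col y) (h : x < y) : rowf x < rowf y := by
  have h2 := grid_eq x
  have h3 := grid_eq y
  rw [h1] at h2
  omega

/-! ### The new order -/

section neworder
variable (M : ℕ) (e : ℕ → ℕ)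

/-- markers of the zones -/
def isMk (x : ℕ) : Prop := rowf x = 0 ∧ M ≤ col x ∧ col x < 2 * M

/-- leaders: the first `M` elements of every row -/
def isLd (x : ℕ) : Prop := col x < rowf x + M

open Classical in
/-- the leader of an element -/
noncomputable def lead (x : ℕ) : ℕ :=
  if isLd M x then x else qseq (rowf x + e x) + rowf x

open Classical in
/-- the zone of an element -/
noncomputable def zone (x : ℕ) : ℕ :=
  if isMk M x then col x - M else e (lead M e x)

/-- the new order -/
def ordn (x y : ℕ) : Prop :=
  zone M e x < zone M e y ∨ (zone M e x = zone M e y ∧ ((isMk M x ∧ ¬ isMk M y) ∨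
    (¬ isMk M x ∧ ¬ isMk M y ∧
      (lead M e y < lead M e x ∨ (lead M e x = lead M e y ∧ x < y)))))

theorem ordn_irrefl (x : ℕ) : ¬ ordn M e x x := by
  unfold ordn
  rintro (h | ⟨_, h | ⟨_, _, h | h⟩⟩)
  · omega
  · exact h.2 h.1
  · omega
  · omega

theorem ordn_trans (x y z : ℕ) : ordn M e x y → ordn M e y z → ordn M e x z := by
  unfold ordn
  intro h1 h2
  by_cases hx : isMk M x <;> by_cases hy : isMk M y <;> by_cases hz : isMk M z <;>
    simp only [hx, hy, hz, true_and, false_and, and_false, and_true, not_true, not_false_iff,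
      false_or, or_false] at h1 h2 ⊢ <;> omega

theorem isMk_inj {x y : ℕ} (hx : isMk M x) (hy : isMk M y) (h : zone M e x = zone M e y) :
    x = y := by
  unfold zone at h
  rw [if_pos hx, if_pos hy] at h
  obtain ⟨h1, h2, h3⟩ := hx
  obtain ⟨h4, h5, h6⟩ := hy
  exact eq_of_grid (by omega) (by omega)

theorem ordn_total (x y : ℕ) (hne : x ≠ y) : ordn M e x y ∨ ordn M e y x := by
  have := isMk_inj M e (x := x) (y := y)
  unfold ordn
  by_cases hx : isMk M x <;> by_cases hy : isMk M y <;>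
    simp only [hx, hy, true_and, false_and, and_false, and_true, not_true, not_false_iff,
      false_or, or_false, true_imp_iff] at this ⊢ <;> omega

variable (he : ∀ x, e x < M)
include he

theorem lead_grid (x : ℕ) : rowf (lead M e x) = rowf x ∧ col (lead M e x) ≤ col x ∧
    isLd M (lead M e x) ∧ lead M e x ≤ x ∧
    (¬ isLd M x → col (lead M e x) = rowf x + e x ∧ lead M e x < x) := by
  have h0 := he x
  unfold lead
  split_ifs with h
  · exact ⟨rfl, le_rfl, h, le_rfl, fun h' => absurd h h'⟩
  · have h1 := row_eq_of (x := qseq (rowf x + e x) + rowf x) rfl (by omega)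
    have h2 := col_eq_of (x := qseq (rowf x + e x) + rowf x) rfl (by omega)
    have h3 := grid_eq x
    have h5 : rowf x + M ≤ col x := by
      unfold isLd at h
      omega
    have h4 := qseq_mono (show rowf x + e x + 1 ≤ col x by omega)
    rw [qseq_succ] at h4
    refine ⟨h1, by omega, ?_, by omega, fun _ => ⟨h2, by omega⟩⟩
    unfold isLd
    rw [h1, h2]
    omega

theorem lead_of_isLd {x : ℕ} (h : isLd M x) : lead M e x = x := by
  unfold lead
  rw [if_pos h]

omit he in
theorem not_mk_of_ld {x : ℕ} (h : isLd M x) : ¬ isMk M x := by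
  rintro ⟨h1, h2, h3⟩
  unfold isLd at h
  omega

theorem zone_lt (x : ℕ) : zone M e x < M := by
  unfold zone
  split_ifs with h
  · obtain ⟨h1, h2, h3⟩ := h
    omega
  · exact he _

theorem zone_lead {x : ℕ} (h : ¬ isMk M x) : zone M e (lead M e x) = zone M e x := by
  have h1 := (lead_grid M e he x).2.2.1
  unfold zone
  rw [if_neg h, if_neg (not_mk_of_ld M h1), lead_of_isLd M e he h1]

/-- the marker of zone `i` -/
theorem mk_spec {i : ℕ} (hi : i < M) : isMk M (qseq (M + i)) ∧ zone M e (qseq (M + i)) = i ∧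
    qseq (M + i) < qseq (2 * M) := by
  have h1 := row_eq_of (x := qseq (M + i)) (c := M + i) (r := 0) rfl (by omega)
  have h2 := col_eq_of (x := qseq (M + i)) (c := M + i) (r := 0) rfl (by omega)
  have h3 : isMk M (qseq (M + i)) := by
    refine ⟨h1, ?_, ?_⟩ <;> rw [h2] <;> omega
  refine ⟨h3, ?_, ?_⟩
  · unfold zone
    rw [if_pos h3, h2]
    omega
  · have := qseq_mono (show M + i + 1 ≤ 2 * M by omega)
    rw [qseq_succ] at this
    omega

omit he in
theorem not_mk_of_large {x : ℕ} (h : qseq (2 * M) ≤ x) : ¬ isMk M x := by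
  rintro ⟨h1, h2, h3⟩
  have := le_col_iff.2 h
  omega

/-- leaders are recognized -/
theorem isLd_iff {n x : ℕ} (hx : qseq (2 * M) ≤ x) (hn : x ≤ n) :
    isLd M x ↔ ∀ y, y ≤ n → (y < x → (ordn M e y x → ∃ m, m ≤ n ∧ (isMk M m ∧
      ((m = y ∨ ordn M e y m) ∧ ordn M e m x)))) := by
  have hxm := not_mk_of_large M hx
  constructor
  · intro h y _ hyx hord
    obtain ⟨h1, h2, h3⟩ := mk_spec M e he (zone_lt M e he x)
    have h4 := lead_of_isLd M e he h
    have h5 := (lead_grid M e he y).2.2.2.1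
    rcases hord with h6 | ⟨h6, ⟨h7, _⟩ | ⟨_, _, h7⟩⟩
    · refine ⟨_, by omega, h1, Or.inr (Or.inl (by omega)), Or.inr ⟨h2, Or.inl ⟨h1, hxm⟩⟩⟩
    · exact ⟨y, by omega, h7, Or.inl rfl, Or.inr ⟨h6, Or.inl ⟨h7, hxm⟩⟩⟩
    · omega
  · intro h
    by_contra hl
    obtain ⟨h1, h2, h3, h4, h5⟩ := lead_grid M e he x
    have h6 := zone_lead M e he hxm
    have h7 := lead_of_isLd M e he h3
    have h8 := not_mk_of_ld M h3
    obtain ⟨m, hm, hmk, hym, hmx⟩ := h (lead M e x) (by omega) (h5 hl).2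
      (Or.inr ⟨h6, Or.inr ⟨h8, hxm, Or.inr ⟨h7, (h5 hl).2⟩⟩⟩)
    rcases hym with h9 | h9
    · rw [h9] at hmk
      exact h8 hmk
    · unfold ordn at h9 hmx
      simp only [hmk, h8, hxm, not_true, false_and, and_false, or_false, true_and,
        not_false_iff, and_true] at h9 hmx
      omega

/-- the leader of an element is recognized -/
theorem lead_iff {x l : ℕ} (hxm : ¬ isMk M x) :
    l = lead M e x ↔ isLd M l ∧ (l = x ∨ ordn M e l x) ∧
      ∀ l', l' ≤ x → (isLd M l' → ((l' = x ∨ ordn M e l' x) → (l' = l ∨ ordn M e l' l))) := by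
  obtain ⟨h1, h2, h3, h4, h5⟩ := lead_grid M e he x
  have h6 := zone_lead M e he hxm
  have h7 := lead_of_isLd M e he h3
  have h8 := not_mk_of_ld M h3
  have hA : lead M e x = x ∨ ordn M e (lead M e x) x := by
    by_cases hl : isLd M x
    · exact Or.inl (lead_of_isLd M e he hl)
    · exact Or.inr (Or.inr ⟨h6, Or.inr ⟨h8, hxm, Or.inr ⟨h7, (h5 hl).2⟩⟩⟩)
  have hB : ∀ l', isLd M l' → (l' = x ∨ ordn M e l' x) →
      (l' = lead M e x ∨ ordn M e l' (lead M e x)) := by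
    intro l' hl' h
    have h9 := lead_of_isLd M e he hl'
    have h10 := not_mk_of_ld M hl'
    rcases h with h | h
    · left
      rw [← h, h9]
    · unfold ordn at h ⊢
      simp only [h10, h8, hxm, false_and, false_or, true_and, not_false_iff] at h ⊢
      omega
  constructor
  · intro h
    subst h
    exact ⟨h3, hA, fun l' _ => hB l'⟩
  · rintro ⟨g1, g2, g3⟩
    have g4 := hB l g1 g2
    have g5 := g3 _ h4 h3 hA
    rcases g4 with g4 | g4
    · exact g4
    · rcases g5 with g5 | g5
      · exact g5.symm
      · exact absurd (ordn_trans M e _ _ _ g4 g5) (ordn_irrefl M e _)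

theorem zone_iff {x i : ℕ} (hxm : ¬ isMk M x) (hi : i < M) :
    zone M e x = i ↔ ∀ j : Fin M, (j : ℕ) ≤ i ↔ ordn M e (qseq (M + j)) x := by
  have hz : ∀ j : Fin M, ordn M e (qseq (M + j)) x ↔ (j : ℕ) ≤ zone M e x := by
    intro j
    obtain ⟨h1, h2, h3⟩ := mk_spec M e he j.2
    unfold ordn
    simp only [h1, h2, hxm, not_true, false_and, or_false, true_and, not_false_iff, and_true]
    omega
  simp only [hz]
  constructor
  · intro h j
    rw [h]
  · intro h
    have h1 := (h ⟨i, hi⟩).1 le_rfl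
    have h2 := (h ⟨zone M e x, zone_lt M e he x⟩).2 le_rfl
    simp only at h1 h2
    omega

end neworder

/-! ### Part A: definability from the new order -/

section partA
variable (M : ℕ) (e : ℕ → ℕ)

theorem pair_lt (R : ℕ → ℕ → Prop) {α : Type} (a b : α) :
    Dfn (pairStruct R) (fun _ v => v a < v b) :=
  Dfn.rel (L := LPair) RelPair.lt a b (fun _ x y => x < y) (fun _ _ => Iff.rfl)

theorem pair_snd (R : ℕ → ℕ → Prop) {α : Type} (a b : α) :
    Dfn (pairStruct R) (fun _ v => R (v a) (v b)) :=
  Dfn.rel (L := LPair) RelPair.snd a b (fun _ x y => R x y) (fun _ _ => Iff.rfl)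

theorem isMk_lt {x : ℕ} (h : isMk M x) : x < qseq (2 * M) := by
  by_contra hc
  exact not_mk_of_large M (by omega) h

theorem base_iff (hM : 0 < M) {n x : ℕ} (hx : qseq (2 * M) ≤ x) (hn : x ≤ n) :
    rowf x = 0 ↔ ¬ isLd M x ∧ ∃ y, y ≤ n ∧ (y + 1 = x ∧ isLd M y) := by
  have hc := le_col_iff.2 hx
  have hg := grid_eq x
  unfold isLd
  constructor
  · intro h
    obtain ⟨c, hc'⟩ : ∃ c, col x = c + 1 := ⟨col x - 1, by omega⟩
    have h1 := qseq_succ c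
    rw [hc'] at hg
    have h2 := col_eq_of (x := x - 1) (c := c) (r := c) (by omega) le_rfl
    have h3 := row_eq_of (x := x - 1) (c := c) (r := c) (by omega) le_rfl
    refine ⟨by omega, x - 1, by omega, by omega, by omega⟩
  · rintro ⟨h1, y, hy, h2, h3⟩
    by_contra h
    have hr := row_le_col x
    have h4 := col_eq_of (x := y) (c := col x) (r := rowf x - 1) (by omega) (by omega)
    have h5 := row_eq_of (x := y) (c := col x) (r := rowf x - 1) (by omega) (by omega)
    omega

theorem collt_iff {n x y : ℕ} (hn : y ≤ n) :
    col x < col y ↔ ∃ z, z ≤ n ∧ (rowf z = 0 ∧ (x < z ∧ z ≤ y)) := by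
  constructor
  · intro h
    have h1 := qseq_mono (show col x + 1 ≤ col y by omega)
    have h2 := lt_qseq_col x
    have h3 := qseq_col_le y
    exact ⟨qseq (col y), by omega, row_eq_of (x := qseq (col y)) (c := col y) (r := 0) rfl (by omega),
      by omega, by omega⟩
  · rintro ⟨z, hz, h1, h2, h3⟩
    have h4 := col_mono h3
    have h5 := col_mono h2.le
    by_contra h6
    have := row_lt_of_col_eq (x := x) (y := z) (by omega) h2
    omega

theorem colsucc_iff {n x y : ℕ} (j : ℕ) (hx : x ≤ n) (hn : y ≤ n) :
    col x + (j + 1) = col y ↔ ∃ w, w ≤ n ∧ (col x + j = col w ∧ (col w < col y ∧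
      ¬ ∃ z, z ≤ n ∧ (col w < col z ∧ col z < col y))) := by
  constructor
  · intro h
    have h2 := qseq_mono (show col x + j ≤ col y by omega)
    have h3 := qseq_col_le y
    have h4 := col_eq_of (x := qseq (col x + j)) (c := col x + j) (r := 0) rfl (by omega)
    refine ⟨qseq (col x + j), by omega, by omega, by omega, ?_⟩
    rintro ⟨z, hz, h5, h6⟩
    omega
  · rintro ⟨w, hw, h1, h2, h3⟩
    by_contra h
    have h5 := qseq_mono (show col w + 1 ≤ col y by omega)
    have h6 := qseq_col_le y
    have h4 := col_eq_of (x := qseq (col w + 1)) (c := col w + 1) (r := 0) rfl (by omega)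
    exact h3 ⟨qseq (col w + 1), by omega, by omega, by omega⟩

theorem dd_iff {n l j : ℕ} (hj : j < M) (hl : qseq (2 * M) ≤ l) (hn : l ≤ n) :
    col l = rowf l + j ↔ isLd M l ∧ ∃ y, y ≤ n ∧ (y + (M - j) = l ∧ (¬ isLd M y ∧
      ∀ z, z ≤ n → (y < z → (z < l → isLd M z)))) := by
  have hc := le_col_iff.2 hl
  have hg := grid_eq l
  have hr := row_le_col l
  have h1 := col_eq_of (x := qseq (col l) + (col l - M)) (c := col l) (r := col l - M) rfl (by omega)
  have h2 := row_eq_of (x := qseq (col l) + (col l - M)) (c := col l) (r := col l - M) rfl (by omega)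
  have hz : ∀ z, qseq (col l) + (col l - M) < z → z ≤ l → isLd M z := by
    intro z hz1 hz2
    have h4 := col_eq_of (x := z) (c := col l) (r := z - qseq (col l)) (by omega) (by omega)
    have h5 := row_eq_of (x := z) (c := col l) (r := z - qseq (col l)) (by omega) (by omega)
    unfold isLd
    omega
  have hy : ¬ isLd M (qseq (col l) + (col l - M)) := by
    unfold isLd
    omega
  constructor
  · intro h
    refine ⟨by unfold isLd; omega, qseq (col l) + (col l - M), by omega, by omega, hy, ?_⟩
    intro z _ hz1 hz2
    exact hz z hz1 hz2.le
  · rintro ⟨h3, y, hyn, h4, h5, h6⟩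
    have h7 : col l < rowf l + M := h3
    have h8 : y = qseq (col l) + (col l - M) := by
      rcases lt_trichotomy y (qseq (col l) + (col l - M)) with h | h | h
      · exact absurd (h6 _ (by omega) h (by omega)) hy
      · exact h
      · exact absurd (hz y h (by omega)) h5
    omega

/-- first element of the row of `x` -/
def rowStart (x : ℕ) : ℕ := qseq (rowf x) + rowf x

theorem rowStart_le (x : ℕ) : rowStart x ≤ x := by
  have h1 := row_le_col x
  have h2 := qseq_mono h1
  have h3 := grid_eq x
  unfold rowStart
  omega

theorem rowStart_lt {x y : ℕ} : rowf x < rowf y ↔ rowStart x < rowStart y := by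
  unfold rowStart
  constructor
  · intro h
    have := qseq_mono h.le
    omega
  · intro h
    by_contra h'
    have := qseq_mono (show rowf y ≤ rowf x by omega)
    omega

theorem rowStart_col (x : ℕ) : col (rowStart x) = rowf x ∧ rowf (rowStart x) = rowf x :=
  ⟨col_eq_of rfl le_rfl, row_eq_of rfl le_rfl⟩

variable (he : ∀ x, e x < M)
include he

theorem start_iff {n x s : ℕ} (hn : x ≤ n) : s = rowStart x ↔
    col s = rowf s + 0 ∧ ∃ l, l ≤ n ∧ (l = lead M e x ∧ ∃ j : Fin M,
      (col l = rowf l + j ∧ col s + j = col l)) := by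
  obtain ⟨h1, h2, h3, h4, h5⟩ := lead_grid M e he x
  obtain ⟨h6, h7⟩ := rowStart_col x
  have h8 := row_le_col (lead M e x)
  constructor
  · intro h
    subst h
    refine ⟨by omega, lead M e x, by omega, rfl, ⟨col (lead M e x) - rowf (lead M e x), ?_⟩, ?_, ?_⟩
    · unfold isLd at h3
      omega
    · dsimp only
      omega
    · dsimp only
      omega
  · rintro ⟨g1, l, hl, g2, j, g3, g4⟩
    subst g2
    exact eq_of_grid (by omega) (by omega)

theorem e_iff {n x i : ℕ} (hx : ¬ isMk M x) (hn : x ≤ n) : e x = i ↔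
    (isLd M x ∧ zone M e x = i) ∨ (¬ isLd M x ∧ ∃ l, l ≤ n ∧ (l = lead M e x ∧ col l = rowf l + i)) := by
  obtain ⟨h1, h2, h3, h4, h5⟩ := lead_grid M e he x
  by_cases hl : isLd M x
  · have : zone M e x = e x := by
      unfold zone
      rw [if_neg hx, lead_of_isLd M e he hl]
    simp [hl, this]
  · have h6 := h5 hl
    simp only [hl, false_and, false_or, not_false_iff, true_and]
    constructor
    · intro h
      exact ⟨_, by omega, rfl, by omega⟩
    · rintro ⟨l, _, rfl, h⟩
      omega

open Dfn in
theorem dA_isMk {α : Type} (a : α) : Dfn (pairStruct (ordn M e)) (fun _ v => isMk M (v a)) :=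
  (small (pair_lt _) a (qseq (2 * M)) (isMk M)).congr (fun _ _ _ =>
    ⟨fun h => ⟨isMk_lt M h, h⟩, fun h => h.2⟩)

open Dfn in
theorem dA_isLd {α : Type} (a : α) : Dfn (pairStruct (ordn M e)) (fun _ v => isLd M (v a)) := by
  refine piece (pair_lt _) a (qseq (2 * M)) ?_ (fun i => const (isLd M i))
    (fun n v hv h => isLd_iff M e he h (hv a)) (fun n v hv h => Iff.rfl)
  exact all (imp (pair_lt _ _ _) (imp (pair_snd _ _ _) (ex (and (dA_isMk M e he _) (and
    (or (eq _ _) (pair_snd _ _ _)) (pair_snd _ _ _))))))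

open Dfn in
theorem dA_lead {α : Type} (a b : α) :
    Dfn (pairStruct (ordn M e)) (fun _ v => v b = lead M e (v a)) := by
  have h : Dfn (pairStruct (ordn M e)) (fun n v => isLd M (v b) ∧ ((v b = v a ∨ ordn M e (v b) (v a)) ∧
      ∀ l', l' ≤ n → (l' ≤ v a → (isLd M l' → ((l' = v a ∨ ordn M e l' (v a)) →
        (l' = v b ∨ ordn M e l' (v b))))))) :=
    and (dA_isLd M e he _) (and (or (eq _ _) (pair_snd _ _ _)) (all (imp (le (pair_lt _) _ _)
      (imp (dA_isLd M e he _) (imp (or (eq _ _) (pair_snd _ _ _)) (or (eq _ _) (pair_snd _ _ _)))))))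
  refine piece (pair_lt _) a (qseq (2 * M)) h (fun i => eqc (pair_lt _) b (lead M e i))
    (fun n v hv hx => ?_) (fun n v hv h => Iff.rfl)
  rw [lead_iff M e he (not_mk_of_large M hx)]
  have := hv a
  constructor
  · rintro ⟨h1, h2, h3⟩
    exact ⟨h1, h2, fun l' _ => h3 l'⟩
  · rintro ⟨h1, h2, h3⟩
    exact ⟨h1, h2, fun l' hl => h3 l' (by omega) hl⟩

open Dfn in
theorem dA_base {α : Type} (a : α) : Dfn (pairStruct (ordn M e)) (fun _ v => rowf (v a) = 0) := by
  refine piece (pair_lt _) a (qseq (2 * M)) ?_ (fun i => const (rowf i = 0))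
    (fun n v hv h => base_iff M (by have := he 0; omega) h (hv a)) (fun n v hv h => Iff.rfl)
  exact and (dA_isLd M e he _).not (ex (and (addc (pair_lt _) _ _ 1) (dA_isLd M e he _)))

open Dfn in
theorem dA_collt {α : Type} (a b : α) :
    Dfn (pairStruct (ordn M e)) (fun _ v => col (v a) < col (v b)) := by
  refine Dfn.congr ?_ (fun n v hv => collt_iff (hv b))
  exact ex (and (dA_base M e he _) (and (pair_lt _ _ _) (le (pair_lt _) _ _)))

open Dfn in
theorem dA_coladd {α : Type} (a b : α) (j : ℕ) :
    Dfn (pairStruct (ordn M e)) (fun _ v => col (v a) + j = col (v b)) := by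
  induction j generalizing α with
  | zero =>
    refine ((dA_collt M e he a b).not.and (dA_collt M e he b a).not).congr (fun n v hv => ?_)
    omega
  | succ j ih =>
    refine Dfn.congr ?_ (fun n v hv => colsucc_iff j (hv a) (hv b))
    exact ex (and (ih _ _) (and (dA_collt M e he _ _) (not (ex (and (dA_collt M e he _ _)
      (dA_collt M e he _ _))))))

open Dfn in
theorem dA_dd {α : Type} (a : α) {j : ℕ} (hj : j < M) :
    Dfn (pairStruct (ordn M e)) (fun _ v => col (v a) = rowf (v a) + j) := by
  refine piece (pair_lt _) a (qseq (2 * M)) ?_ (fun i => const (col i = rowf i + j))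
    (fun n v hv h => dd_iff M hj h (hv a)) (fun n v hv h => Iff.rfl)
  exact and (dA_isLd M e he _) (ex (and (addc (pair_lt _) _ _ (M - j)) (and (dA_isLd M e he _).not
    (all (imp (pair_lt _ _ _) (imp (pair_lt _ _ _) (dA_isLd M e he _)))))))

open Dfn in
theorem dA_start {α : Type} (a b : α) :
    Dfn (pairStruct (ordn M e)) (fun _ v => v b = rowStart (v a)) := by
  refine Dfn.congr ?_ (fun n v hv => start_iff M e he (hv a))
  exact and (dA_dd M e he _ (by have := he 0; omega)) (ex (and (dA_lead M e he _ _) (exFin fun j =>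
    and (dA_dd M e he _ j.2) (dA_coladd M e he _ _ _))))

open Dfn in
theorem dA_rowlt {α : Type} (a b : α) :
    Dfn (pairStruct (ordn M e)) (fun _ v => rowf (v a) < rowf (v b)) := by
  have h : Dfn (pairStruct (ordn M e)) (fun n v => ∃ s, s ≤ n ∧ (s = rowStart (v a) ∧
      ∃ t, t ≤ n ∧ (t = rowStart (v b) ∧ s < t))) :=
    ex (and (dA_start M e he _ _) (ex (and (dA_start M e he _ _) (pair_lt _ _ _))))
  refine h.congr (fun n v hv => ?_)
  rw [rowStart_lt]
  constructor
  · intro h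
    exact ⟨_, le_trans (rowStart_le _) (hv a), rfl, _, le_trans (rowStart_le _) (hv b), rfl, h⟩
  · rintro ⟨s, _, rfl, t, _, rfl, h⟩
    exact h

open Dfn in
theorem dA_ordc {α : Type} (a b : α) :
    Dfn (pairStruct (ordn M e)) (fun _ v => ordc (v a) (v b)) := by
  refine ((dA_rowlt M e he a b).or ((dA_rowlt M e he b a).not.and (dA_collt M e he a b))).congr
    (fun n v hv => ?_)
  unfold ordc
  omega

open Dfn in
theorem dA_e {α : Type} (a : α) {i : ℕ} (hi : i < M) :
    Dfn (pairStruct (ordn M e)) (fun _ v => e (v a) = i) := by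
  have hz : Dfn (pairStruct (ordn M e)) (fun n v => ∀ j : Fin M, (j : ℕ) ≤ i ↔
      ∃ m, m ≤ n ∧ (m = qseq (M + j) ∧ ordn M e m (v a))) :=
    allFin fun j => iff (const _) (ex (and (eqc (pair_lt _) _ _) (pair_snd _ _ _)))
  have h : Dfn (pairStruct (ordn M e)) (fun n v => 
    (isLd M (v a) ∧ ∀ j : Fin M, (j : ℕ) ≤ i ↔
      ∃ m, m ≤ n ∧ (m = qseq (M + j) ∧ ordn M e m (v a))) ∨
        (¬ isLd M (v a) ∧ ∃ l, l ≤ n ∧ (l = lead M e (v a) ∧ col l = rowf l + i))) := by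
    exact or (and (dA_isLd M e he _) hz) (and (dA_isLd M e he _).not (ex (and (dA_lead M e he _ _)
      (dA_dd M e he _ hi))))
  refine piece (pair_lt _) a (qseq (2 * M)) h (fun j => const (e j = i))
    (fun n v hv hx => ?_) (fun n v hv h => Iff.rfl)
  rw [e_iff M e he (not_mk_of_large M hx) (hv a), zone_iff M e he (not_mk_of_large M hx) hi]
  refine or_congr (and_congr Iff.rfl (forall_congr' fun j => iff_congr Iff.rfl ?_)) Iff.rfl
  have h1 := (mk_spec M e he j.2).2.2
  have h2 := hv a
  constructor
  · intro h
    exact ⟨_, by omega, rfl, h⟩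
  · rintro ⟨m, _, rfl, h⟩
    exact h

end partA

/-! ### Part B: definability from `Bit`. First the order. -/

/-- bit `c` of `a` is set -/
def tb (a c : ℕ) : Prop := Nat.testBit a c = true

theorem bit_tb {α : Type} (a b : α) : Dfn bitStruct (fun _ v => tb (v a) (v b)) :=
  Dfn.rel (L := LBit) BitRel.bit a b (fun _ x y => tb x y) (fun _ _ => Iff.rfl)

theorem tb_pow {a c : ℕ} (h : tb a c) : 2 ^ c ≤ a := Nat.ge_two_pow_of_testBit h

theorem tb_lt {a c : ℕ} (h : tb a c) : c < a :=
  lt_of_lt_of_le Nat.lt_two_pow_self (tb_pow h)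

theorem tb_ext {a b : ℕ} (h : ∀ c, tb a c ↔ tb b c) : a = b :=
  Nat.eq_of_testBit_eq fun c => Bool.eq_iff_iff.2 (h c)

theorem lt_of_tb {a b c : ℕ} (h1 : ¬ tb a c) (h2 : tb b c) (h3 : ∀ d, c < d → (tb a d ↔ tb b d)) :
    a < b :=
  Nat.lt_of_testBit c (by simpa [tb] using h1) h2 fun d hd => Bool.eq_iff_iff.2 (h3 d hd)

theorem top_diff {a b : ℕ} (h : a < b) : ∃ c, tb b c ∧ ¬ tb a c ∧ ∀ d, c < d → (tb a d ↔ tb b d) := by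
  obtain ⟨c, h1, h2⟩ := Nat.exists_most_significant_bit (n := a ^^^ b) (by
    rw [Ne, Nat.xor_eq_zero_iff]; omega)
  have h3 : ∀ d, c < d → (tb a d ↔ tb b d) := by
    intro d hd
    have := h2 d hd
    rw [Nat.testBit_xor] at this
    unfold tb
    cases ha : a.testBit d <;> cases hb : b.testBit d <;> simp_all
  rw [Nat.testBit_xor] at h1
  by_cases hb : tb b c
  · refine ⟨c, hb, ?_, h3⟩
    intro ha
    unfold tb at ha hb
    simp [ha, hb] at h1
  · have ha : tb a c := by
      unfold tb at hb ⊢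
      cases ha : a.testBit c <;> simp_all
    have := lt_of_tb hb ha (fun d hd => (h3 d hd).symm)
    omega

/-- one step of order definition -/
def stp (n : ℕ) (Q : ℕ → ℕ → Prop) (a b : ℕ) : Prop :=
  ∃ c, c ≤ n ∧ (tb b c ∧ (¬ tb a c ∧ ∀ d, d ≤ n → (¬ (tb a d ↔ tb b d) → (¬ d = c → Q d c))))

theorem stp_sound {n : ℕ} {Q : ℕ → ℕ → Prop} {a b : ℕ} (ha : a ≤ n) (hb : b ≤ n)
    (hQ : ∀ d c, d ≤ n → c < b → Q d c → d < c) (h : stp n Q a b) : a < b := by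
  obtain ⟨c, hc, h1, h2, h3⟩ := h
  refine lt_of_tb h2 h1 fun d hd => ?_
  by_contra hne
  have hdn : d ≤ n := by
    by_cases h : tb a d
    · have := tb_lt h
      omega
    · have : tb b d := by tauto
      have := tb_lt this
      omega
  have := hQ d c hdn (tb_lt h1) (h3 d hdn hne (by omega))
  omega

theorem stp_complete {n : ℕ} {Q : ℕ → ℕ → Prop} {a b : ℕ} (hb : b ≤ n)
    (hQ : ∀ d c, tb b c → d < c → Q d c) (h : a < b) : stp n Q a b := by
  obtain ⟨c, h1, h2, h3⟩ := top_diff h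
  have h4 := tb_lt h1
  refine ⟨c, by omega, h1, h2, fun d hd h5 h6 => hQ d c h1 ?_⟩
  by_contra hc
  exact h5 (h3 d (by omega))

/-- order coded by a set of initial segments -/
def inR (n R a b : ℕ) : Prop :=
  (∃ s, s ≤ n ∧ (tb R s ∧ (tb s a ∧ ¬ tb s b))) ∧ (∃ s, s ≤ n ∧ (tb R s ∧ tb s b))

def validR (n R : ℕ) : Prop :=
  ∀ a, a ≤ n → ∀ b, b ≤ n → (inR n R a b → stp n (inR n R) a b)

def Lt0 (n a b : ℕ) : Prop := ∃ R, R ≤ n ∧ (validR n R ∧ inR n R a b)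

theorem validR_sound {n R : ℕ} (h : validR n R) : ∀ b a, a ≤ n → b ≤ n → inR n R a b → a < b := by
  intro b
  induction b using Nat.strong_induction_on with
  | _ b ih =>
    intro a ha hb hab
    exact stp_sound ha hb (fun d c hd hc hdc => ih c hc d hd (by omega) hdc) (h a ha b hb hab)

theorem Lt0_sound {n a b : ℕ} (ha : a ≤ n) (hb : b ≤ n) (h : Lt0 n a b) : a < b := by
  obtain ⟨R, _, h1, h2⟩ := h
  exact validR_sound h1 b a ha hb h2

open Classical in
/-- number with prescribed bits below `m` -/
noncomputable def mkBits (m : ℕ) (p : ℕ → Prop) : ℕ := Nat.ofBits (fun i : Fin m => decide (p i))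

theorem mkBits_lt (m : ℕ) (p : ℕ → Prop) : mkBits m p < 2 ^ m := Nat.ofBits_lt_two_pow _

theorem tb_mkBits (m : ℕ) (p : ℕ → Prop) (i : ℕ) : tb (mkBits m p) i ↔ i < m ∧ p i := by
  unfold tb mkBits
  by_cases h : i < m
  · rw [Nat.testBit_ofBits_lt _ _ h]
    simp [h]
  · rw [Nat.testBit_ofBits_ge _ _ (by omega)]
    simp [h]

theorem tb_ones (m i : ℕ) : tb (2 ^ m - 1) i ↔ i < m := by
  unfold tb
  rw [Nat.testBit_two_pow_sub_one]
  simp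

theorem Lt0_complete {n a b : ℕ} (hn : 2 ^ (2 ^ (b + 1)) ≤ n) (h : a < b) : Lt0 n a b := by
  obtain ⟨R, hR⟩ : ∃ R, R = mkBits (2 ^ (b + 1)) (fun s => ∃ i, i ≤ b ∧ s = 2 ^ (i + 1) - 1) :=
    ⟨_, rfl⟩
  have hRn : R < n := by
    have := mkBits_lt (2 ^ (b + 1)) (fun s => ∃ i, i ≤ b ∧ s = 2 ^ (i + 1) - 1)
    omega
  have hRb : ∀ s, tb R s ↔ ∃ i, i ≤ b ∧ s = 2 ^ (i + 1) - 1 := by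
    intro s
    rw [hR, tb_mkBits]
    constructor
    · exact fun h => h.2
    · rintro ⟨i, hi, hs⟩
      refine ⟨?_, i, hi, hs⟩
      have : 2 ^ (i + 1) ≤ 2 ^ (b + 1) := Nat.pow_le_pow_right (by norm_num) (by omega)
      have : 0 < 2 ^ (i + 1) := by positivity
      omega
  have hin : ∀ x y, inR n R x y ↔ x < y ∧ y ≤ b := by
    intro x y
    constructor
    · rintro ⟨⟨s, _, h1, h2, h3⟩, ⟨t, _, h4, h5⟩⟩
      obtain ⟨i, hi, rfl⟩ := (hRb _).1 h1
      obtain ⟨j, hj, rfl⟩ := (hRb _).1 h4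
      rw [tb_ones] at h2 h3 h5
      omega
    · rintro ⟨h1, h2⟩
      have g1 : tb R (2 ^ (x + 1) - 1) := (hRb _).2 ⟨x, by omega, rfl⟩
      have g2 : tb R (2 ^ (y + 1) - 1) := (hRb _).2 ⟨y, by omega, rfl⟩
      have g3 := tb_lt g1
      have g4 := tb_lt g2
      refine ⟨⟨_, by omega, g1, ?_, ?_⟩, ⟨_, by omega, g2, ?_⟩⟩ <;> rw [tb_ones] <;> omega
  refine ⟨R, by omega, ?_, (hin _ _).2 ⟨h, le_rfl⟩⟩
  intro x hx y hy hxy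
  rw [hin] at hxy
  refine stp_complete hy (fun d c hc hdc => ?_) hxy.1
  rw [hin]
  have := tb_lt hc
  omega

def Lt1 (n a b : ℕ) : Prop := stp n (Lt0 n) a b
def Lt2 (n a b : ℕ) : Prop := stp n (Lt1 n) a b
def Lt3 (n a b : ℕ) : Prop := stp n (Lt2 n) a b
def Lt4 (n a b : ℕ) : Prop := stp n (Lt3 n) a b

theorem Lt1_sound {n a b : ℕ} (ha : a ≤ n) (hb : b ≤ n) (h : Lt1 n a b) : a < b :=
  stp_sound ha hb (fun _ _ hd hc h => Lt0_sound hd (by omega) h) h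
theorem Lt2_sound {n a b : ℕ} (ha : a ≤ n) (hb : b ≤ n) (h : Lt2 n a b) : a < b :=
  stp_sound ha hb (fun _ _ hd hc h => Lt1_sound hd (by omega) h) h
theorem Lt3_sound {n a b : ℕ} (ha : a ≤ n) (hb : b ≤ n) (h : Lt3 n a b) : a < b :=
  stp_sound ha hb (fun _ _ hd hc h => Lt2_sound hd (by omega) h) h
theorem Lt4_sound {n a b : ℕ} (ha : a ≤ n) (hb : b ≤ n) (h : Lt4 n a b) : a < b :=
  stp_sound ha hb (fun _ _ hd hc h => Lt3_sound hd (by omega) h) h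

theorem Lt1_complete {n a b : ℕ} (hn : 2 ^ (2 * b) ≤ n) (h : a < b) : Lt1 n a b := by
  refine stp_complete ?_ (fun d c hc hdc => Lt0_complete ?_ hdc) h
  · have : 2 * b < 2 ^ (2 * b) := Nat.lt_two_pow_self
    omega
  · refine le_trans (Nat.pow_le_pow_right (by norm_num) ?_) hn
    have := tb_pow hc
    rw [pow_succ]
    omega

theorem Lt2_complete {n a b : ℕ} (hn : b * b ≤ n) (h : a < b) : Lt2 n a b := by
  refine stp_complete (le_trans (Nat.le_mul_self b) hn) (fun d c hc hdc => Lt1_complete ?_ hdc) h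
  have h1 := tb_pow hc
  have h2 := Nat.mul_le_mul h1 h1
  rw [two_mul, pow_add]
  omega

theorem sq_le_two_pow (c : ℕ) : c * c ≤ 2 * 2 ^ c := by
  induction c with
  | zero => norm_num
  | succ k ih =>
    rcases Nat.lt_or_ge k 3 with h | h
    · interval_cases k <;> norm_num
    · rw [pow_succ]
      nlinarith

theorem Lt3_complete {n a b : ℕ} (hn : 2 * b ≤ n) (h : a < b) : Lt3 n a b := by
  refine stp_complete (by omega) (fun d c hc hdc => Lt2_complete ?_ hdc) h
  have h1 := tb_pow hc
  have h2 := sq_le_two_pow c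
  omega

theorem two_mul_le_pow {c : ℕ} (h : 0 < c) : 2 * c ≤ 2 ^ c := by
  obtain ⟨k, rfl⟩ : ∃ k, c = k + 1 := ⟨c - 1, by omega⟩
  have : k < 2 ^ k := Nat.lt_two_pow_self
  rw [pow_succ]
  omega

theorem Lt4_complete {n a b : ℕ} (hn : b ≤ n) (h : a < b) : Lt4 n a b := by
  refine stp_complete (by omega) (fun d c hc hdc => Lt3_complete ?_ hdc) h
  have h1 := tb_pow hc
  have h2 := two_mul_le_pow (show 0 < c by omega)
  omega

open Dfn in
theorem dB_stp {α : Type} {Q : ℕ → ℕ → ℕ → Prop}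
    (hQ : ∀ {α : Type} (a b : α), Dfn bitStruct (fun n v => Q n (v a) (v b))) (a b : α) :
    Dfn bitStruct (fun n v => stp n (Q n) (v a) (v b)) :=
  ex (and (bit_tb _ _) (and (bit_tb _ _).not (all (imp (iff (bit_tb _ _) (bit_tb _ _)).not
    (imp (eq _ _).not (hQ _ _))))))

open Dfn in
theorem dB_inR {α : Type} (r a b : α) :
    Dfn bitStruct (fun n v => inR n (v r) (v a) (v b)) :=
  and (ex (and (bit_tb _ _) (and (bit_tb _ _) (bit_tb _ _).not))) (ex (and (bit_tb _ _) (bit_tb _ _)))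

open Dfn in
theorem dB_Lt0 {α : Type} (a b : α) :
    Dfn bitStruct (fun n v => Lt0 n (v a) (v b)) := by
  refine ex (and ?_ (dB_inR _ _ _))
  refine all (all (imp (dB_inR _ _ _) ?_))
  exact ex (and (bit_tb _ _) (and (bit_tb _ _).not (all (imp (iff (bit_tb _ _) (bit_tb _ _)).not
    (imp (eq _ _).not (dB_inR _ _ _))))))

theorem bit_lt {α : Type} (a b : α) : Dfn bitStruct (fun _ v => v a < v b) :=
  (dB_stp (dB_stp (dB_stp (dB_stp dB_Lt0))) a b).congr (fun n v hv =>
    ⟨fun h => Lt4_complete (hv b) h, fun h => Lt4_sound (hv a) (hv b) h⟩)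

/-! ### Addition -/

def carr (n x y p : ℕ) : Prop :=
  ∃ q, q ≤ n ∧ (q < p ∧ (tb x q ∧ (tb y q ∧ ∀ r, r ≤ n → (q < r → (r < p → (tb x r ∨ tb y r))))))

theorem carr_succ {n x y p : ℕ} (hp : p ≤ n) :
    carr n x y (p + 1) ↔ (tb x p ∧ tb y p) ∨ ((tb x p ∨ tb y p) ∧ carr n x y p) := by
  constructor
  · rintro ⟨q, hq, h1, h2, h3, h4⟩
    rcases Nat.lt_or_ge q p with h | h
    · exact Or.inr ⟨h4 p hp h (by omega), q, hq, h, h2, h3, fun r hr g1 g2 => h4 r hr g1 (by omega)⟩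
    · obtain rfl : q = p := by omega
      exact Or.inl ⟨h2, h3⟩
  · rintro (⟨h1, h2⟩ | ⟨h0, q, hq, h1, h2, h3, h4⟩)
    · exact ⟨p, hp, by omega, h1, h2, fun r _ g1 g2 => by omega⟩
    · refine ⟨q, hq, by omega, h2, h3, fun r hr g1 g2 => ?_⟩
      rcases Nat.lt_or_ge r p with h | h
      · exact h4 r hr g1 h
      · obtain rfl : r = p := by omega
        exact h0

theorem tb_iff_div (x p : ℕ) : tb x p ↔ x / 2 ^ p % 2 = 1 := by
  unfold tb
  rw [Nat.testBit_eq_decide_div_mod_eq]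
  simp

theorem mod_succ (x p : ℕ) : (tb x p ∧ x % 2 ^ (p + 1) = x % 2 ^ p + 2 ^ p) ∨
    (¬ tb x p ∧ x % 2 ^ (p + 1) = x % 2 ^ p) := by
  rw [tb_iff_div, Nat.mod_pow_succ]
  rcases Nat.mod_two_eq_zero_or_one (x / 2 ^ p) with h | h <;> simp [h]

theorem carr_iff {n x y p : ℕ} (hp : p ≤ n + 1) : carr n x y p ↔ 2 ^ p ≤ x % 2 ^ p + y % 2 ^ p := by
  induction p with
  | zero =>
    simp only [pow_zero, Nat.mod_one]
    constructor
    · rintro ⟨q, _, h, _⟩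
      omega
    · intro h
      omega
  | succ p ih =>
    have h0 : 0 < 2 ^ p := by positivity
    have h1 := Nat.mod_lt x h0
    have h2 := Nat.mod_lt y h0
    rw [carr_succ (by omega), ih (by omega)]
    have h3 : 2 ^ (p + 1) = 2 * 2 ^ p := by ring
    have hx := mod_succ x p
    have hy := mod_succ y p
    generalize x % 2 ^ (p + 1) = x1 at hx ⊢
    generalize y % 2 ^ (p + 1) = y1 at hy ⊢
    rw [h3]
    generalize x % 2 ^ p = x0 at *
    generalize y % 2 ^ p = y0 at *
    generalize 2 ^ p = T at *
    rcases hx with ⟨g1, g2⟩ | ⟨g1, g2⟩ <;> rcases hy with ⟨g3, g4⟩ | ⟨g3, g4⟩ <;>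
      simp only [g1, g3, true_and, true_or, or_true, false_and, and_false, false_or,
        or_false, true_iff, false_iff, or_self, and_self] <;> omega

theorem tb_add {n x y p : ℕ} (hp : p ≤ n + 1) : tb (x + y) p ↔ ((tb x p ↔ tb y p) ↔ carr n x y p) := by
  rw [carr_iff hp, tb_iff_div, tb_iff_div, tb_iff_div, Nat.add_div (by positivity)]
  split_ifs with h <;> simp only [h, iff_true, iff_false] <;> omega

theorem add_iff {n x y z : ℕ} (hx : x ≤ n) (hy : y ≤ n) (hz : z ≤ n) :
    x + y = z ↔ ∀ p, p ≤ n → (tb z p ↔ ((tb x p ↔ tb y p) ↔ carr n x y p)) := by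
  constructor
  · rintro rfl p hp
    exact tb_add (by omega)
  · intro h
    apply tb_ext
    intro p
    rcases Nat.lt_or_ge n p with hp | hp
    · have h1 : ¬ tb z p := fun h => by have := tb_lt h; omega
      have h2 : ¬ tb (x + y) p := fun h => by
        have g1 := tb_pow h
        have g2 : 2 ^ (n + 1) ≤ 2 ^ p := Nat.pow_le_pow_right (by norm_num) hp
        have g3 : n < 2 ^ n := Nat.lt_two_pow_self
        rw [pow_succ] at g2
        omega
      simp [h1, h2]
    · rw [h p hp, tb_add (n := n) (by omega)]

open Dfn in
theorem bit_add {α : Type} (a b c : α) : Dfn bitStruct (fun _ v => v a + v b = v c) := by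
  have hc : ∀ {β : Type} (x y p : β), Dfn bitStruct (fun n v => carr n (v x) (v y) (v p)) :=
    fun x y p => ex (and (bit_lt _ _) (and (bit_tb _ _) (and (bit_tb _ _) (all (imp (bit_lt _ _)
      (imp (bit_lt _ _) (or (bit_tb _ _) (bit_tb _ _))))))))
  refine Dfn.congr ?_ (fun n v hv => add_iff (hv a) (hv b) (hv c))
  exact all (iff (bit_tb _ _) (iff (iff (bit_tb _ _) (bit_tb _ _)) (hc _ _ _)))

/-! ### Logarithmic bound -/

/-- bound for short numbers -/
def bd (n : ℕ) : ℕ := 3 * Nat.log 2 n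

theorem pos_iff {n p : ℕ} : p ≤ Nat.log 2 n ↔ p = 0 ∨ ∃ x, x ≤ n ∧ tb x p := by
  rcases Nat.eq_zero_or_pos n with rfl | hn
  · simp only [Nat.log_zero_right, Nat.le_zero]
    constructor
    · exact fun h => Or.inl h
    · rintro (h | ⟨x, rfl, h⟩)
      · exact h
      · have := tb_lt h
        omega
  · rw [Nat.le_log_iff_pow_le (by norm_num) (by omega)]
    constructor
    · intro h
      exact Or.inr ⟨2 ^ p, h, by simp [tb]⟩
    · rintro (rfl | ⟨x, hx, h⟩)
      · simp only [pow_zero]; omega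
      · exact le_trans (tb_pow h) hx

theorem bd_iff {n s : ℕ} (hs : s ≤ n) : s ≤ bd n ↔ ∃ p, p ≤ n ∧ (p ≤ Nat.log 2 n ∧
    ∃ q, q ≤ n ∧ (q ≤ Nat.log 2 n ∧ ∃ r, r ≤ n ∧ (r ≤ Nat.log 2 n ∧ ∃ u, u ≤ n ∧ (p + q = u ∧ u + r = s)))) := by
  unfold bd
  constructor
  · intro h
    refine ⟨min s (Nat.log 2 n), by omega, by omega, min (s - min s (Nat.log 2 n)) (Nat.log 2 n),
      by omega, by omega, s - min s (Nat.log 2 n) - min (s - min s (Nat.log 2 n)) (Nat.log 2 n), by omega,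
      by omega, _, ?_, rfl, by omega⟩
    omega
  · rintro ⟨p, _, h1, q, _, h2, r, _, h3, u, _, h4, h5⟩
    omega

open Dfn in
theorem dB_bd {α : Type} (a : α) : Dfn bitStruct (fun n v => v a ≤ bd n) := by
  have hp : ∀ {β : Type} (p : β), Dfn bitStruct (fun n v => v p ≤ Nat.log 2 n) := fun p =>
    (or (eqc bit_lt p 0) (ex (bit_tb none (some p)))).congr (fun n v hv => pos_iff)
  refine Dfn.congr ?_ (fun n v hv => bd_iff (hv a))
  exact ex (and (hp _) (ex (and (hp _) (ex (and (hp _) (ex (and (bit_add _ _ _) (bit_add _ _ _))))))))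

/-! ### Chains -/

/-- the word `w` codes the short number `s` at position `d` -/
def code (n w d s : ℕ) : Prop :=
  s ≤ bd n ∧ ∀ t, t ≤ n → ((∃ s', s' ≤ n ∧ (s' ≤ bd n ∧ tb s' t)) →
    ∃ u, u ≤ n ∧ (d + t = u ∧ (tb w u ↔ tb s t)))

open Dfn in
theorem dB_code {α : Type} (w d s : α) : Dfn bitStruct (fun n v => code n (v w) (v d) (v s)) :=
  and (dB_bd _) (all (imp (ex (and (dB_bd _) (bit_tb _ _))) (ex (and (bit_add _ _ _)
    (iff (bit_tb _ _) (bit_tb _ _))))))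

theorem code_unique {n w d s s' : ℕ} (hs : s ≤ n) (hs' : s' ≤ n) (h : code n w d s)
    (h' : code n w d s') : s = s' := by
  apply tb_ext
  intro t
  by_cases ht : tb s t ∨ tb s' t
  · have hT : ∃ s', s' ≤ n ∧ (s' ≤ bd n ∧ tb s' t) := by
      rcases ht with ht | ht
      · exact ⟨s, hs, h.1, ht⟩
      · exact ⟨s', hs', h'.1, ht⟩
    obtain ⟨x, hx, _, hxt⟩ := hT
    have htn := tb_lt hxt
    obtain ⟨u, _, h1, h2⟩ := h.2 t (by omega) ⟨x, hx, by assumption, hxt⟩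
    obtain ⟨u', _, h3, h4⟩ := h'.2 t (by omega) ⟨x, hx, by assumption, hxt⟩
    subst h1
    subst h3
    rw [← h2, h4]
  · tauto

def chain (n : ℕ) (Q : ℕ → ℕ → ℕ → ℕ → Prop) (j s j' s' : ℕ) : Prop :=
  ∃ w1, w1 ≤ n ∧ ∃ w2, w2 ≤ n ∧ ∃ D, D ≤ n ∧ ∃ o, o ≤ n ∧ (o = 0 ∧ (code n w1 o j ∧ (code n w2 o s ∧
    (tb D o ∧ ((∀ d, d ≤ n → (tb D d → (¬ d = o →
      ∃ d0, d0 ≤ n ∧ (d0 < d ∧ (tb D d0 ∧ ∃ j0, j0 ≤ n ∧ ∃ s0, s0 ≤ n ∧ ∃ j1, j1 ≤ n ∧ ∃ s1, s1 ≤ n ∧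
        (code n w1 d0 j0 ∧ (code n w2 d0 s0 ∧ (code n w1 d j1 ∧ (code n w2 d s1 ∧ Q j0 s0 j1 s1)))))))))
      ∧ ∃ d, d ≤ n ∧ (tb D d ∧ (code n w1 d j' ∧ code n w2 d s')))))))

open Dfn in
theorem dB_chain {Q : ℕ → ℕ → ℕ → ℕ → ℕ → ℕ → ℕ → ℕ → Prop}
    (hQ : ∀ {β : Type} (x y m j s j' s' : β), Dfn bitStruct (fun n v =>
      Q n (v x) (v y) (v m) (v j) (v s) (v j') (v s'))) {β : Type} (x y m j s j' s' : β) :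
    Dfn bitStruct (fun n v => chain n (Q n (v x) (v y) (v m)) (v j) (v s) (v j') (v s')) := by
  refine ex (ex (ex (ex (and (eqc bit_lt _ 0) (and (dB_code _ _ _) (and (dB_code _ _ _)
    (and (bit_tb _ _) (and ?_ ?_))))))))
  · refine all (imp (bit_tb _ _) (imp (eq _ _).not (ex (and (bit_lt _ _) (and (bit_tb _ _)
      (ex (ex (ex (ex (and (dB_code _ _ _) (and (dB_code _ _ _) (and (dB_code _ _ _)
      (and (dB_code _ _ _) ?_)))))))))))))
    exact hQ _ _ _ _ _ _ _
  · exact ex (and (bit_tb _ _) (and (dB_code _ _ _) (dB_code _ _ _)))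

theorem chain_sound {n : ℕ} {Q : ℕ → ℕ → ℕ → ℕ → Prop} {F : ℕ → ℕ}
    (hQ : ∀ j s j' s', j ≤ bd n → s ≤ bd n → j' ≤ bd n → s' ≤ bd n → Q j s j' s' → s = F j → s' = F j')
    {j s j' s' : ℕ} (hj : j ≤ n) (hs : s ≤ n) (hj' : j' ≤ n) (hs' : s' ≤ n)
    (h : chain n Q j s j' s') (h0 : s = F j) : s' = F j' := by
  obtain ⟨w1, _, w2, _, D, _, o, ho, rfl, c1, c2, hD, hstep, d, hd, hDd, c3, c4⟩ := h
  have key : ∀ d, d ≤ n → tb D d → ∀ a b, a ≤ n → b ≤ n → code n w1 d a → code n w2 d b → b = F a := by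
    intro d
    induction d using Nat.strong_induction_on with
    | _ d ih =>
      intro hd hDd a b ha hb ca cb
      by_cases hd0 : d = 0
      · subst hd0
        rw [code_unique ha hj ca c1, code_unique hb hs cb c2, h0]
      · obtain ⟨d0, hd0n, hlt, hDd0, j0, hj0, s0, hs0, j1, hj1, s1, hs1, g1, g2, g3, g4, hq⟩ :=
          hstep d hd hDd hd0
        rw [code_unique ha hj1 ca g3, code_unique hb hs1 cb g4]
        exact hQ j0 s0 j1 s1 g1.1 g2.1 g3.1 g4.1 hq (ih d0 hlt hd0n hDd0 j0 s0 hj0 hs0 g1 g2)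
  exact key d hd hDd _ _ hj' hs' c3 c4

/-- existence of a word coding a sequence -/
theorem exists_word {n K l : ℕ} (hl : bd n < 2 ^ l) (hK : (K + 1) * l ≤ Nat.log 2 n) (hn : 0 < n)
    (a : ℕ → ℕ) (ha : ∀ i, i ≤ K → a i ≤ bd n) :
    ∃ w, w ≤ n ∧ ∀ i, i ≤ K → code n w (i * l) (a i) := by
  have h1 : 2 ^ Nat.log 2 n ≤ n := Nat.pow_log_le_self 2 (by omega)
  have h2 : 2 ^ ((K + 1) * l) ≤ 2 ^ Nat.log 2 n := Nat.pow_le_pow_right (by norm_num) hK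
  have h3 := mkBits_lt ((K + 1) * l) (fun p => tb (a (p / l)) (p % l))
  refine ⟨mkBits ((K + 1) * l) (fun p => tb (a (p / l)) (p % l)), by omega, ?_⟩
  intro i hi
  refine ⟨ha i hi, fun t ht => ?_⟩
  rintro ⟨s', hs', hb, hst⟩
  have htl : t < l := by
    by_contra hc
    have g1 := tb_pow hst
    have g2 : 2 ^ l ≤ 2 ^ t := Nat.pow_le_pow_right (by norm_num) (by omega)
    omega
  have h4 : (i + 1) * l ≤ (K + 1) * l := Nat.mul_le_mul_right _ (by omega)
  have h5 : i * l + t < (K + 1) * l := by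
    rw [add_mul, one_mul] at h4
    omega
  have h6 : Nat.log 2 n < 2 ^ Nat.log 2 n := Nat.lt_two_pow_self
  refine ⟨i * l + t, by omega, rfl, ?_⟩
  rw [tb_mkBits]
  have h7 : (i * l + t) / l = i := by
    rw [mul_comm, Nat.mul_add_div (by omega), Nat.div_eq_of_lt htl]
    omega
  have h8 : (i * l + t) % l = t := by
    rw [mul_comm, Nat.mul_add_mod, Nat.mod_eq_of_lt htl]
  rw [h7, h8]
  simp [h5]

theorem bd_le {n : ℕ} : Nat.log 2 n ≤ bd n := by unfold bd; omega

theorem chain_complete {n K l W : ℕ} {Q : ℕ → ℕ → ℕ → ℕ → Prop} {F : ℕ → ℕ}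
    (hl : bd n < 2 ^ l) (hl0 : 0 < l) (hK : (K + 1) * l ≤ Nat.log 2 n) (hn : bd n ≤ n) (hn0 : 0 < n)
    (hF : ∀ j, j ≤ bd n → F j ≤ bd n)
    (hQ : ∀ j j', j ≤ j' → j' ≤ bd n → j' ≤ j + W → Q j (F j) j' (F j'))
    {j j' : ℕ} (h1 : j ≤ j') (h2 : j' ≤ bd n) (h3 : j' ≤ j + W * K) :
    chain n Q j (F j) j' (F j') := by
  obtain ⟨a, ha⟩ : ∃ a : ℕ → ℕ, ∀ i, a i = min (j + W * i) j' := ⟨_, fun _ => rfl⟩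
  have hab : ∀ i, a i ≤ bd n := fun i => by rw [ha]; omega
  have h0 : a 0 = j := by rw [ha]; omega
  have hKj : a K = j' := by rw [ha]; omega
  obtain ⟨w1, hw1, c1⟩ := exists_word hl hK hn0 a (fun i _ => hab i)
  obtain ⟨w2, hw2, c2⟩ := exists_word hl hK hn0 (fun i => F (a i)) (fun i _ => hF _ (hab i))
  have g1 : 2 ^ Nat.log 2 n ≤ n := Nat.pow_log_le_self 2 (by omega)
  have g2 : 2 ^ ((K + 1) * l) ≤ 2 ^ Nat.log 2 n := Nat.pow_le_pow_right (by norm_num) hK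
  have g3 := mkBits_lt ((K + 1) * l) (fun p => p % l = 0)
  have g6 : Nat.log 2 n < 2 ^ Nat.log 2 n := Nat.lt_two_pow_self
  have hD : ∀ d, tb (mkBits ((K + 1) * l) (fun p => p % l = 0)) d ↔ ∃ i, i ≤ K ∧ d = i * l := by
    intro d
    rw [tb_mkBits]
    constructor
    · rintro ⟨h4, h5⟩
      refine ⟨d / l, ?_, ?_⟩
      · have := (Nat.div_lt_iff_lt_mul hl0).2 h4
        omega
      · exact (Nat.div_mul_cancel (Nat.dvd_of_mod_eq_zero h5)).symm
    · rintro ⟨i, hi, rfl⟩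
      refine ⟨Nat.mul_lt_mul_of_pos_right (by omega) hl0, by simp⟩
  have hDn : ∀ i, i ≤ K → i * l ≤ n := by
    intro i hi
    have : i * l ≤ (K + 1) * l := Nat.mul_le_mul_right _ (by omega)
    omega
  have e1 := c1 0 (by omega)
  have e2 := c2 0 (by omega)
  have e3 := c1 K (by omega)
  have e4 := c2 K (by omega)
  simp only [h0, hKj, zero_mul] at e1 e2 e3 e4
  refine ⟨w1, hw1, w2, hw2, mkBits ((K + 1) * l) (fun p => p % l = 0), by omega, 0, by omega, rfl,
    e1, e2, (hD 0).2 ⟨0, by omega, by simp⟩, ?_, K * l, hDn K le_rfl, (hD _).2 ⟨K, le_rfl, rfl⟩, e3, e4⟩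
  intro d hd hDd hd0
  obtain ⟨i, hi, rfl⟩ := (hD d).1 hDd
  obtain ⟨i', rfl⟩ : ∃ i', i = i' + 1 := ⟨i - 1, by
    rcases Nat.eq_zero_or_pos i with rfl | h
    · simp at hd0
    · omega⟩
  have b1 := hab i'
  have b2 := hab (i' + 1)
  have b3 := hF _ b1
  have b4 := hF _ b2
  refine ⟨i' * l, hDn i' (by omega), Nat.mul_lt_mul_of_pos_right (by omega) hl0,
    (hD _).2 ⟨i', by omega, rfl⟩, a i', by omega, F (a i'), by omega, a (i' + 1), by omega,
    F (a (i' + 1)), by omega, c1 i' (by omega), c2 i' (by omega), c1 (i' + 1) hi, c2 (i' + 1) hi, ?_⟩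
  have h5 : W * (i' + 1) = W * i' + W := by ring
  apply hQ
  · rw [ha, ha, h5]
    omega
  · exact b2
  · rw [ha, ha, h5]
    omega

/-! ### Recursion on short numbers -/

theorem lin_le_pow (h : ℕ) (hh : 9 ≤ h) : 48 * h ≤ 2 ^ h := by
  induction h, hh using Nat.le_induction with
  | base => norm_num
  | succ k hk ih =>
    rw [pow_succ]
    omega

/-- the prefix is large enough for two nested chains of length `K` -/
structure Big (n K l : ℕ) : Prop where
  hl : bd n < 2 ^ l
  hl0 : 0 < l
  hK : (K + 1) * l ≤ Nat.log 2 n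
  hKK : bd n ≤ K * K
  hn : 2 * bd n + 2 ≤ n
  hlog : 2 ≤ Nat.log 2 n

theorem exists_big : ∃ N, ∀ n, N ≤ n → ∃ K l, Big n K l := by
  obtain ⟨L, hL⟩ : ∃ L : ℕ, L = 65536 := ⟨_, rfl⟩
  refine ⟨2 ^ L, fun n hn => ?_⟩
  have hn0 : 0 < n := lt_of_lt_of_le (by positivity) hn
  have hlog : L ≤ Nat.log 2 n := by
    rwa [Nat.le_log_iff_pow_le (by norm_num) (by omega)]
  have h1 : 2 ^ Nat.log 2 n ≤ n := Nat.pow_log_le_self 2 (by omega)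
  have h2 := lin_le_pow (Nat.log 2 n) (by omega)
  obtain ⟨l, hl⟩ : ∃ l, l = Nat.size (bd n) := ⟨_, rfl⟩
  have hbd : bd n = 3 * Nat.log 2 n := rfl
  have h3 : bd n < 2 ^ l := by rw [hl]; exact Nat.lt_size_self _
  have h4 : 16 < l := by
    rw [hl, Nat.lt_size]
    omega
  have h5 : 2 ^ (l - 1) ≤ bd n := by
    rw [← Nat.lt_size, ← hl]
    omega
  obtain ⟨h, hh⟩ : ∃ h, h = (l + 1) / 2 := ⟨_, rfl⟩
  have h6 := lin_le_pow h (by omega)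
  have h7 : 2 ^ (2 * h - 2) ≤ 2 ^ (l - 1) := Nat.pow_le_pow_right (by norm_num) (by omega)
  have h8 : 2 ^ h * 2 ^ h = 4 * 2 ^ (2 * h - 2) := by
    rw [← pow_add, show h + h = 2 * h - 2 + 2 by omega, pow_add]
    ring
  have h9 : 2 ^ l ≤ 2 ^ h * 2 ^ h := by
    rw [← pow_add]
    exact Nat.pow_le_pow_right (by norm_num) (by omega)
  have h10 : 48 * h * 2 ^ h ≤ 2 ^ h * 2 ^ h := Nat.mul_le_mul_right _ h6
  have h11 : (2 ^ h + 1) * l ≤ (2 * 2 ^ h) * (2 * h) :=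
    Nat.mul_le_mul (by have : 0 < 2 ^ h := by positivity
                       omega) (by omega)
  have h12 : (2 * 2 ^ h) * (2 * h) = 4 * (h * 2 ^ h) := by ring
  have h13 : 48 * h * 2 ^ h = 48 * (h * 2 ^ h) := by ring
  exact ⟨2 ^ h, l, h3, by omega, by omega, by omega, by omega, by omega⟩

/-- the graph of a recursively defined function -/
def gr (n : ℕ) (Q : ℕ → ℕ → ℕ → ℕ → Prop) (j s : ℕ) : Prop :=
  ∃ o, o ≤ n ∧ (o = 0 ∧ chain n (chain n Q) o o j s)

theorem chain_bd {n : ℕ} {Q : ℕ → ℕ → ℕ → ℕ → Prop} {j s j' s' : ℕ} (h : chain n Q j s j' s') :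
    j' ≤ bd n := by
  obtain ⟨w1, _, w2, _, D, _, o, ho, rfl, c1, c2, hD, hstep, d, hd, hDd, c3, c4⟩ := h
  exact c3.1

theorem gr_iff {n K l : ℕ} (hB : Big n K l) {Q : ℕ → ℕ → ℕ → ℕ → Prop} {F : ℕ → ℕ} (hF0 : F 0 = 0)
    (hF : ∀ j, j ≤ bd n → F j ≤ bd n)
    (hs : ∀ j s j' s', j ≤ bd n → s ≤ bd n → j' ≤ bd n → s' ≤ bd n → Q j s j' s' → s = F j → s' = F j')
    (hc0 : ∀ j, j ≤ bd n → Q j (F j) j (F j))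
    (hc : ∀ j, j + 1 ≤ bd n → Q j (F j) (j + 1) (F (j + 1))) {j s : ℕ} (hj : j ≤ n) (hsn : s ≤ n) :
    gr n Q j s ↔ j ≤ bd n ∧ s = F j := by
  obtain ⟨h1, h2, h3, h4, h5, h6⟩ := hB
  constructor
  · rintro ⟨o, _, rfl, h⟩
    refine ⟨chain_bd h, ?_⟩
    refine chain_sound (F := F) ?_ (by omega) (by omega) hj hsn h hF0.symm
    intro j s j' s' g1 g2 g3 g4 g5 g6
    exact chain_sound hs (by omega) (by omega) (by omega) (by omega) g5 g6
  · rintro ⟨g1, rfl⟩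
    refine ⟨0, by omega, rfl, ?_⟩
    have key := chain_complete (Q := chain n Q) (F := F) (W := 1 * K) h1 h2 h3 (by omega) (by omega) hF
      (fun j j' e1 e2 e3 => chain_complete (W := 1) h1 h2 h3 (by omega) (by omega) hF ?_ e1 e2 e3)
      (j := 0) (j' := j) (by omega) g1 (by rw [one_mul]; omega)
    · rwa [hF0] at key
    · intro a a' e1 e2 e3
      rcases Nat.lt_or_ge a a' with h | h
      · obtain rfl : a' = a + 1 := by omega
        exact hc a e2
      · obtain rfl : a' = a := by omega
        exact hc0 a' e2

open Dfn in
theorem dB_gr {Q : ℕ → ℕ → ℕ → ℕ → ℕ → ℕ → ℕ → ℕ → Prop}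
    (hQ : ∀ {β : Type} (x y m j s j' s' : β), Dfn bitStruct (fun n v =>
      Q n (v x) (v y) (v m) (v j) (v s) (v j') (v s'))) {β : Type} (x y m j s : β) :
    Dfn bitStruct (fun n v => gr n (Q n (v x) (v y) (v m)) (v j) (v s)) := by
  refine ex (and (eqc bit_lt _ 0) ?_)
  exact dB_chain (Q := fun n x y m => chain n (Q n x y m)) (dB_chain hQ) _ _ _ _ _ _ _

/-! ### Multiplication -/

/-- a bit as a number -/
def bt (x k : ℕ) : ℕ := x / 2 ^ k % 2

/-- partial column sum of the product -/
def csum (x y m j : ℕ) : ℕ :=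
  ∑ k ∈ Finset.range j, if k ≤ m then bt x k * bt y (m - k) else 0

/-- carries of the product -/
def mcarry (x y : ℕ) : ℕ → ℕ
  | 0 => 0
  | m + 1 => (mcarry x y m + csum x y m (m + 1)) / 2

/-- remaining part of the product -/
def mrest (x y m : ℕ) : ℕ := ∑ k ∈ Finset.range m, bt x k * (y / 2 ^ (m - k)) + x / 2 ^ m * y

theorem div_bt (x k : ℕ) : x / 2 ^ k = bt x k + 2 * (x / 2 ^ (k + 1)) := by
  unfold bt
  rw [pow_succ, ← Nat.div_div_eq_div_mul]
  omega

theorem mrest_succ (x y m : ℕ) : mrest x y m = csum x y m (m + 1) + 2 * mrest x y (m + 1) := by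
  have h1 : csum x y m (m + 1) = ∑ k ∈ Finset.range (m + 1), bt x k * bt y (m - k) := by
    unfold csum
    refine Finset.sum_congr rfl fun k hk => ?_
    rw [Finset.mem_range] at hk
    rw [if_pos (by omega)]
  have h2 : mrest x y m = ∑ k ∈ Finset.range (m + 1), bt x k * (y / 2 ^ (m - k)) +
      2 * (x / 2 ^ (m + 1)) * y := by
    unfold mrest
    rw [Finset.sum_range_succ, div_bt x m]
    simp only [Nat.sub_self, pow_zero, Nat.div_one]
    ring
  rw [h1, h2]
  unfold mrest
  rw [mul_add, Finset.mul_sum, ← add_assoc, ← Finset.sum_add_distrib, mul_assoc]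
  congr 1
  refine Finset.sum_congr rfl fun k hk => ?_
  rw [Finset.mem_range] at hk
  rw [div_bt y (m - k), show m - k + 1 = m + 1 - k by omega]
  ring

theorem mul_div_pow (x y m : ℕ) : x * y / 2 ^ m = mcarry x y m + mrest x y m := by
  induction m with
  | zero => simp [mcarry, mrest]
  | succ m ih =>
    rw [pow_succ, ← Nat.div_div_eq_div_mul, ih, mrest_succ, mcarry]
    omega

theorem tb_mul (x y m : ℕ) : tb (x * y) m ↔ (mcarry x y m + csum x y m (m + 1)) % 2 = 1 := by
  rw [tb_iff_div, mul_div_pow, mrest_succ]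
  omega

theorem bt_eq (x k : ℕ) : bt x k = 1 ∧ tb x k ∨ bt x k = 0 ∧ ¬ tb x k := by
  rw [tb_iff_div]
  unfold bt
  omega

theorem csum_succ (x y m j : ℕ) :
    csum x y m (j + 1) = csum x y m j + if j ≤ m then bt x j * bt y (m - j) else 0 := by
  unfold csum
  rw [Finset.sum_range_succ]

/-- condition for a summand -/
def ccond (n x y m j : ℕ) : Prop := tb x j ∧ ∃ i, i ≤ n ∧ (i + j = m ∧ tb y i)

theorem csum_step {n x y m j : ℕ} (hm : m ≤ n) :
    (ccond n x y m j ∧ csum x y m (j + 1) = csum x y m j + 1) ∨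
    (¬ ccond n x y m j ∧ csum x y m (j + 1) = csum x y m j) := by
  rw [csum_succ]
  unfold ccond
  split_ifs with h
  · rcases bt_eq x j with ⟨h1, h2⟩ | ⟨h1, h2⟩
    · rcases bt_eq y (m - j) with ⟨h3, h4⟩ | ⟨h3, h4⟩
      · left
        refine ⟨⟨h2, m - j, by omega, by omega, h4⟩, by rw [h1, h3]⟩
      · right
        refine ⟨?_, by rw [h3]; omega⟩
        rintro ⟨_, i, _, h5, h6⟩
        obtain rfl : i = m - j := by omega
        exact h4 h6
    · right
      exact ⟨fun h => h2 h.1, by rw [h1]; omega⟩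
  · right
    refine ⟨?_, by omega⟩
    rintro ⟨_, i, _, h5, h6⟩
    omega

theorem csum_le (x y m j : ℕ) : csum x y m j ≤ j := by
  induction j with
  | zero => simp [csum]
  | succ j ih =>
    rcases csum_step (n := m) (x := x) (y := y) (m := m) (j := j) le_rfl with h | h <;> omega

theorem mcarry_le (x y m : ℕ) : mcarry x y m ≤ m := by
  induction m with
  | zero => simp [mcarry]
  | succ m ih =>
    have := csum_le x y m (m + 1)
    rw [mcarry]
    omega

def stepC (n x y m j s j' s' : ℕ) : Prop :=
  (j' = j ∧ s' = s) ∨ (j + 1 = j' ∧ ((ccond n x y m j ∧ s + 1 = s') ∨ (¬ ccond n x y m j ∧ s' = s)))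

def stepG (n x y _m j s j' s' : ℕ) : Prop :=
  (j' = j ∧ s' = s) ∨ (j + 1 = j' ∧ ∃ t, t ≤ n ∧ (gr n (stepC n x y j) j' t ∧
    ∃ u, u ≤ n ∧ (s + t = u ∧ ∃ h, h ≤ n ∧ (s' + s' = h ∧ (h = u ∨ h + 1 = u)))))

theorem grC_iff {n K l : ℕ} (hB : Big n K l) {x y m j s : ℕ} (hm : m ≤ n) (hj : j ≤ n) (hs : s ≤ n) :
    gr n (stepC n x y m) j s ↔ j ≤ bd n ∧ s = csum x y m j := by
  refine gr_iff hB (by simp [csum]) (fun j hj => le_trans (csum_le _ _ _ _) hj) ?_ ?_ ?_ hj hs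
  · rintro j s j' s' - - - - (⟨rfl, rfl⟩ | ⟨rfl, h⟩) h0
    · exact h0
    · have := csum_step (x := x) (y := y) (j := j) hm
      by_cases hc : ccond n x y m j <;> simp only [hc, true_and, not_true, false_and, or_false,
        not_false_iff, false_or] at h this <;> omega
  · exact fun j _ => Or.inl ⟨rfl, rfl⟩
  · intro j _
    refine Or.inr ⟨rfl, ?_⟩
    have := csum_step (x := x) (y := y) (j := j) hm
    by_cases hc : ccond n x y m j <;> simp only [hc, true_and, not_true, false_and, or_false,
        not_false_iff, false_or] at this ⊢ <;> omega

theorem grG_iff {n K l : ℕ} (hB : Big n K l) {x y m j s : ℕ} (hj : j ≤ n) (hs : s ≤ n) :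
    gr n (stepG n x y m) j s ↔ j ≤ bd n ∧ s = mcarry x y j := by
  have hn := hB.hn
  refine gr_iff hB (by simp [mcarry]) (fun j hj => le_trans (mcarry_le _ _ _) hj) ?_ ?_ ?_ hj hs
  · rintro j s j' s' g1 g2 g3 g4 (⟨rfl, rfl⟩ | ⟨rfl, t, ht, h1, u, hu, h2, h, hh, h3, h4⟩) h0
    · exact h0
    · rw [grC_iff hB (by omega) (by omega) ht] at h1
      rw [mcarry]
      omega
  · exact fun j _ => Or.inl ⟨rfl, rfl⟩
  · intro j hj
    have h1 := csum_le x y j (j + 1)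
    have h2 := mcarry_le x y j
    have h3 : mcarry x y (j + 1) = (mcarry x y j + csum x y j (j + 1)) / 2 := by rw [mcarry]
    refine Or.inr ⟨rfl, csum x y j (j + 1), by omega, ?_, _, ?_, rfl, _, ?_, rfl, ?_⟩
    · rw [grC_iff hB (by omega) (by omega) (by omega)]
      exact ⟨hj, rfl⟩
    · omega
    · omega
    · omega

def mulF (n x y z : ℕ) : Prop :=
  ∀ m, m ≤ n → ∀ m1, m1 ≤ n → (m + 1 = m1 → (m1 ≤ bd n → (tb z m ↔
    ∃ s, s ≤ n ∧ (gr n (stepC n x y m) m1 s ∧ ∃ t, t ≤ n ∧ (gr n (stepG n x y m) m t ∧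
      ∃ u, u ≤ n ∧ (s + t = u ∧ ∃ h, h ≤ n ∧ ∃ h1, h1 ≤ n ∧ (h + h = h1 ∧ h1 + 1 = u)))))))

theorem mulF_bit {n K l : ℕ} (hB : Big n K l) {x y m : ℕ} (hm : m + 1 ≤ bd n) : tb (x * y) m ↔
    ∃ s, s ≤ n ∧ (gr n (stepC n x y m) (m + 1) s ∧ ∃ t, t ≤ n ∧ (gr n (stepG n x y m) m t ∧
      ∃ u, u ≤ n ∧ (s + t = u ∧ ∃ h, h ≤ n ∧ ∃ h1, h1 ≤ n ∧ (h + h = h1 ∧ h1 + 1 = u)))) := by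
  have hn := hB.hn
  have h1 := csum_le x y m (m + 1)
  have h2 := mcarry_le x y m
  rw [tb_mul]
  constructor
  · intro h
    refine ⟨csum x y m (m + 1), by omega, (grC_iff hB (by omega) (by omega) (by omega)).2 ⟨hm, rfl⟩,
      mcarry x y m, by omega, (grG_iff hB (by omega) (by omega)).2 ⟨by omega, rfl⟩, _, by omega, rfl,
      (mcarry x y m + csum x y m (m + 1)) / 2, by omega, _, ?_, rfl, ?_⟩ <;> omega
  · rintro ⟨s, hs, g1, t, ht, g2, u, hu, g3, h, hh, h1, hh1, g4, g5⟩
    rw [grC_iff hB (by omega) (by omega) hs] at g1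
    rw [grG_iff hB (by omega) ht] at g2
    omega

theorem mulF_iff {n K l : ℕ} (hB : Big n K l) {x y z : ℕ} (hx : x ≤ n) (hy : y ≤ n) (hz : z ≤ n) :
    z = x * y ↔ mulF n x y z := by
  have hn := hB.hn
  constructor
  · rintro rfl m hm m1 hm1 rfl hb
    exact mulF_bit hB hb
  · intro h
    apply tb_ext
    intro m
    rcases Nat.lt_or_ge m (bd n) with hm | hm
    · rw [h m (by omega) (m + 1) (by omega) rfl hm, mulF_bit hB hm]
    · have h1 : n < 2 ^ (Nat.log 2 n + 1) := Nat.lt_pow_succ_log_self (by norm_num) n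
      have h2 : x * y < 2 ^ (Nat.log 2 n + 1) * 2 ^ (Nat.log 2 n + 1) :=
        Nat.mul_lt_mul'' (by omega) (by omega)
      have h3 := hB.hlog
      have h4 : bd n = 3 * Nat.log 2 n := rfl
      rw [← pow_add] at h2
      have h5 : 2 ^ (Nat.log 2 n + 1 + (Nat.log 2 n + 1)) ≤ 2 ^ m :=
        Nat.pow_le_pow_right (by norm_num) (by omega)
      have h6 : 2 ^ (Nat.log 2 n + 1) ≤ 2 ^ m :=
        Nat.pow_le_pow_right (by norm_num) (by omega)
      have g1 : ¬ tb z m := fun h => by have := tb_pow h; omega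
      have g2 : ¬ tb (x * y) m := fun h => by have := tb_pow h; omega
      simp [g1, g2]

open Dfn in
theorem dB_ccond {α : Type} (x y m j : α) :
    Dfn bitStruct (fun n v => ccond n (v x) (v y) (v m) (v j)) :=
  and (bit_tb _ _) (ex (and (bit_add _ _ _) (bit_tb _ _)))

open Dfn in
theorem dB_stepC {α : Type} (x y m j s j' s' : α) :
    Dfn bitStruct (fun n v => stepC n (v x) (v y) (v m) (v j) (v s) (v j') (v s')) :=
  or (and (eq _ _) (eq _ _)) (and (addc bit_lt _ _ 1) (or (and (dB_ccond _ _ _ _) (addc bit_lt _ _ 1))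
    (and (dB_ccond _ _ _ _).not (eq _ _))))

open Dfn in
theorem dB_stepG {α : Type} (x y m j s j' s' : α) :
    Dfn bitStruct (fun n v => stepG n (v x) (v y) (v m) (v j) (v s) (v j') (v s')) :=
  or (and (eq _ _) (eq _ _)) (and (addc bit_lt _ _ 1) (ex (and (dB_gr dB_stepC _ _ _ _ _)
    (ex (and (bit_add _ _ _) (ex (and (bit_add _ _ _) (or (eq _ _) (addc bit_lt _ _ 1)))))))))

open Dfn in
theorem dB_mulF {α : Type} (x y z : α) :
    Dfn bitStruct (fun n v => mulF n (v x) (v y) (v z)) :=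
  all (all (imp (addc bit_lt _ _ 1) (imp (dB_bd _) (iff (bit_tb _ _) (ex (and (dB_gr dB_stepC _ _ _ _ _)
    (ex (and (dB_gr dB_stepG _ _ _ _ _) (ex (and (bit_add _ _ _) (ex (ex (and (bit_add _ _ _)
      (addc bit_lt _ _ 1))))))))))))))

theorem bit_mul {α : Type} (a b c : α) : Dfn bitStruct (fun _ v => v c = v a * v b) := by
  obtain ⟨N, hN⟩ := exists_big
  have h : Dfn bitStruct (fun _ (v : Fin 3 → ℕ) => v 2 = v 0 * v 1) := by
    refine Dfn.eventually bit_lt N (dB_mulF 0 1 2) (fun n v hn hv => ?_)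
    obtain ⟨K, l, hB⟩ := hN n hn
    exact mulF_iff hB (hv 0) (hv 1) (hv 2)
  exact h.rename ![a, b, c]

/-! ### The new order is definable from `Bit` -/

theorem qseq_iff {n c q : ℕ} (hc : c ≤ n) (hq : q ≤ n) : q = qseq c ↔
    ∃ h, h ≤ n ∧ ∃ h2, h2 ≤ n ∧ (h + h = h2 ∧ ((h2 = c ∧ ∃ p, p ≤ n ∧ (p = h * c ∧ p + h = q)) ∨
      (h2 + 1 = c ∧ ∃ p, p ≤ n ∧ (p = c * h ∧ p + c = q)))) := by
  have key : ∀ h, (c = h + h → qseq c = h * c + h) ∧ (c = h + h + 1 → qseq c = c * h + c) := by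
    intro h
    constructor
    · rintro rfl
      have : (h + h) * (h + h + 1) = 2 * (h * (h + h) + h) := by ring
      unfold qseq
      omega
    · rintro rfl
      have : (h + h + 1) * (h + h + 1 + 1) = 2 * ((h + h + 1) * h + (h + h + 1)) := by ring
      unfold qseq
      omega
  constructor
  · rintro rfl
    rcases Nat.even_or_odd' c with ⟨h, h1 | h1⟩
    · have := (key h).1 (by omega)
      exact ⟨h, by omega, h + h, by omega, rfl, Or.inl ⟨by omega, h * c, by omega, rfl, by omega⟩⟩
    · have := (key h).2 (by omega)
      exact ⟨h, by omega, h + h, by omega, rfl, Or.inr ⟨by omega, c * h, by omega, rfl, by omega⟩⟩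
  · rintro ⟨h, _, h2, _, rfl, ⟨h3, p, _, h4, h5⟩ | ⟨h3, p, _, h4, h5⟩⟩
    · rw [(key h).1 h3.symm]
      omega
    · rw [(key h).2 h3.symm]
      omega

open Dfn in
theorem dB_qseq {α : Type} (a b : α) : Dfn bitStruct (fun _ v => v b = qseq (v a)) := by
  refine Dfn.congr ?_ (fun n v hv => qseq_iff (hv a) (hv b))
  exact ex (ex (and (bit_add _ _ _) (or
    (and (eq _ _) (ex (and (bit_mul _ _ _) (bit_add _ _ _))))
    (and (addc bit_lt _ _ 1) (ex (and (bit_mul _ _ _) (bit_add _ _ _)))))))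

open Dfn in
theorem dB_col {α : Type} (a b : α) : Dfn bitStruct (fun _ v => v b = col (v a)) := by
  have h : Dfn bitStruct (fun n v => ∃ q, q ≤ n ∧ (q = qseq (v b) ∧ ∃ r, r ≤ n ∧
      (r ≤ v b ∧ q + r = v a))) :=
    ex (and (dB_qseq _ _) (ex (and (le bit_lt _ _) (bit_add _ _ _))))
  refine h.congr (fun n v hv => ?_)
  have h1 := hv a
  constructor
  · intro h
    have h2 := grid_eq (v a)
    rw [h]
    exact ⟨qseq (col (v a)), by omega, rfl, rowf (v a), by omega, row_le_col _, by omega⟩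
  · rintro ⟨q, _, rfl, r, _, h2, h3⟩
    exact (col_eq_of h3.symm h2).symm

open Dfn in
theorem dB_row {α : Type} (a b : α) : Dfn bitStruct (fun _ v => v b = rowf (v a)) := by
  have h : Dfn bitStruct (fun n v => ∃ c, c ≤ n ∧ (c = col (v a) ∧ ∃ q, q ≤ n ∧ (q = qseq c ∧
      q + v b = v a))) :=
    ex (and (dB_col _ _) (ex (and (dB_qseq _ _) (bit_add _ _ _))))
  refine h.congr (fun n v hv => ?_)
  have h1 := hv a
  have h2 := grid_eq (v a)
  have h3 := le_qseq (col (v a))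
  constructor
  · intro h
    exact ⟨col (v a), by omega, rfl, qseq (col (v a)), by omega, rfl, by omega⟩
  · rintro ⟨c, _, rfl, q, _, rfl, h⟩
    omega

theorem row_le (x : ℕ) : rowf x ≤ x := by
  have := grid_eq x
  omega

theorem col_le (x : ℕ) : col x ≤ x := by
  have := grid_eq x
  have h3 := le_qseq (col x)
  omega

section partB
variable (M : ℕ) (e : ℕ → ℕ)

open Dfn in
theorem dB_isMk {α : Type} (a : α) : Dfn bitStruct (fun _ v => isMk M (v a)) := by
  have h : Dfn bitStruct (fun n v => ∃ c, c ≤ n ∧ (c = col (v a) ∧ ∃ r, r ≤ n ∧ (r = rowf (v a) ∧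
      (r = 0 ∧ (¬ c < M ∧ c < 2 * M))))) :=
    ex (and (dB_col _ _) (ex (and (dB_row _ _) (and (eqc bit_lt _ 0) (and (ltc bit_lt _ M).not
      (ltc bit_lt _ (2 * M)))))))
  refine h.congr (fun n v hv => ?_)
  have h1 := hv a
  have h2 := col_le (v a)
  have h3 := row_le (v a)
  unfold isMk
  constructor
  · rintro ⟨g1, g2, g3⟩
    exact ⟨_, by omega, rfl, _, by omega, rfl, by omega, by omega, by omega⟩
  · rintro ⟨c, _, rfl, r, _, rfl, g1, g2, g3⟩
    omega

open Dfn in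
theorem dB_isLd {α : Type} (a : α) : Dfn bitStruct (fun _ v => isLd M (v a)) := by
  have h : Dfn bitStruct (fun n v => ∃ c, c ≤ n ∧ (c = col (v a) ∧ ∃ r, r ≤ n ∧ (r = rowf (v a) ∧
      ∃ i, i < M ∧ r + i = c))) :=
    ex (and (dB_col _ _) (ex (and (dB_row _ _) (exLt M fun i => addc bit_lt _ _ i))))
  refine h.congr (fun n v hv => ?_)
  have h1 := hv a
  have h2 := col_le (v a)
  have h3 := row_le (v a)
  have h4 := row_le_col (v a)
  unfold isLd
  constructor
  · intro h
    exact ⟨_, by omega, rfl, _, by omega, rfl, col (v a) - rowf (v a), by omega, by omega⟩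
  · rintro ⟨c, _, rfl, r, _, rfl, i, g1, g2⟩
    omega

variable (he : ∀ x, e x < M)
  (hd : ∀ {α : Type} (a : α) (j : ℕ), Dfn bitStruct (fun _ v => e (v a) = j))
include he hd

open Dfn in
theorem dB_lead {α : Type} (a b : α) : Dfn bitStruct (fun _ v => v b = lead M e (v a)) := by
  have h : Dfn bitStruct (fun n v => (isLd M (v a) ∧ v b = v a) ∨ (¬ isLd M (v a) ∧
      ∃ r, r ≤ n ∧ (r = rowf (v a) ∧ ∃ j, j < M ∧ (e (v a) = j ∧ ∃ c, c ≤ n ∧ (r + j = c ∧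
        ∃ q, q ≤ n ∧ (q = qseq c ∧ q + r = v b)))))) :=
    or (and (dB_isLd _ _) (eq _ _)) (and (dB_isLd _ _).not (ex (and (dB_row _ _) (exLt M fun j =>
      and (hd _ j) (ex (and (addc bit_lt _ _ j) (ex (and (dB_qseq _ _) (bit_add _ _ _)))))))))
  refine h.congr (fun n v hv => ?_)
  have h1 := hv a
  have h2 := hv b
  have h3 := row_le (v a)
  unfold lead
  split_ifs with hl
  · simp [hl]
  · simp only [hl, false_and, false_or, not_false_iff, true_and]
    have h4 := le_qseq (rowf (v a) + e (v a))
    constructor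
    · intro h
      exact ⟨_, by omega, rfl, _, he _, rfl, _, by omega, rfl, _, by omega, rfl, by omega⟩
    · rintro ⟨r, _, rfl, j, _, rfl, c, _, rfl, q, _, rfl, h⟩
      omega

open Dfn in
theorem dB_zone {α : Type} (a : α) (j : ℕ) : Dfn bitStruct (fun _ v => zone M e (v a) = j) := by
  have h : Dfn bitStruct (fun n v => (isMk M (v a) ∧ ∃ c, c ≤ n ∧ (c = col (v a) ∧ c = M + j)) ∨
      (¬ isMk M (v a) ∧ ∃ l, l ≤ n ∧ (l = lead M e (v a) ∧ e l = j))) :=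
    or (and (dB_isMk _ _) (ex (and (dB_col _ _) (eqc bit_lt _ (M + j)))))
      (and (dB_isMk _ _).not (ex (and (dB_lead M e he hd _ _) (hd _ j))))
  refine h.congr (fun n v hv => ?_)
  have h1 := hv a
  have h2 := col_le (v a)
  have h3 := (lead_grid M e he (v a)).2.2.2.1
  unfold zone
  split_ifs with hm
  · simp only [hm, true_and, not_true, false_and, or_false]
    obtain ⟨g1, g2, g3⟩ := hm
    constructor
    · intro h
      exact ⟨_, by omega, rfl, by omega⟩
    · rintro ⟨c, _, rfl, h⟩
      omega
  · simp only [hm, false_and, false_or, not_false_iff, true_and]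
    constructor
    · intro h
      exact ⟨_, by omega, rfl, h⟩
    · rintro ⟨l, _, rfl, h⟩
      exact h

open Dfn in
theorem dB_ordn {α : Type} (a b : α) : Dfn bitStruct (fun _ v => ordn M e (v a) (v b)) := by
  have h : Dfn bitStruct (fun n v => ∃ i, i < M ∧ ∃ j, j < M ∧ (zone M e (v a) = i ∧
      (zone M e (v b) = j ∧ (i < j ∨ (i = j ∧ ((isMk M (v a) ∧ ¬ isMk M (v b)) ∨
      (¬ isMk M (v a) ∧ (¬ isMk M (v b) ∧ ∃ l, l ≤ n ∧ (l = lead M e (v a) ∧ ∃ l', l' ≤ n ∧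
        (l' = lead M e (v b) ∧ (l' < l ∨ (l = l' ∧ v a < v b)))))))))))) :=
    exLt M fun i => exLt M fun j => and (dB_zone M e he hd _ i) (and (dB_zone M e he hd _ j)
      (or (const (i < j)) (and (const (i = j)) (or (and (dB_isMk _ _) (dB_isMk _ _).not)
        (and (dB_isMk _ _).not (and (dB_isMk _ _).not (ex (and (dB_lead M e he hd _ _)
          (ex (and (dB_lead M e he hd _ _) (or (bit_lt _ _) (and (eq _ _) (bit_lt _ _))))))))))))) 
  refine h.congr (fun n v hv => ?_)
  have h1 := hv a
  have h2 := hv b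
  have h3 := (lead_grid M e he (v a)).2.2.2.1
  have h4 := (lead_grid M e he (v b)).2.2.2.1
  unfold ordn
  constructor
  · intro h
    refine ⟨_, zone_lt M e he _, _, zone_lt M e he _, rfl, rfl, ?_⟩
    refine h.imp id (And.imp id (Or.imp id (And.imp id (And.imp id ?_))))
    intro h
    exact ⟨_, by omega, rfl, _, by omega, rfl, h⟩
  · rintro ⟨i, _, j, _, rfl, rfl, h⟩
    refine h.imp id (And.imp id (Or.imp id (And.imp id (And.imp id ?_))))
    rintro ⟨l, _, rfl, l', _, rfl, h⟩
    exact h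

end partB

/-! ### Assembling -/

theorem dfn_two {L : FirstOrder.Language.{0, 0}} {S : ∀ n, L.Structure (Fin (n + 1))}
    {R : ℕ → ℕ → Prop} (h : Dfn S (fun _ (v : Fin 2 → ℕ) => R (v 0) (v 1))) :
    ∃ φ : L.Formula (Fin 2), ∀ n : ℕ, ∀ a b : Fin (n + 1),
      (@Formula.Realize L (Fin (n + 1)) (S n) (Fin 2) φ ![a, b] ↔ R (a : ℕ) (b : ℕ)) := by
  obtain ⟨φ, hφ⟩ := h
  exact ⟨φ, fun n a b => hφ n ![a, b]⟩

theorem dfn_one {L : FirstOrder.Language.{0, 0}} {S : ∀ n, L.Structure (Fin (n + 1))}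
    {R : ℕ → Prop} (h : Dfn S (fun _ (v : Fin 1 → ℕ) => R (v 0))) :
    ∃ φ : L.Formula (Fin 1), ∀ n : ℕ, ∀ a : Fin (n + 1),
      (@Formula.Realize L (Fin (n + 1)) (S n) (Fin 1) φ ![a] ↔ R (a : ℕ)) := by
  obtain ⟨φ, hφ⟩ := h
  exact ⟨φ, fun n a => hφ n ![a]⟩

theorem dfn_of_one {L : FirstOrder.Language.{0, 0}} {S : ∀ n, L.Structure (Fin (n + 1))}
    {R : ℕ → Prop} (h : ∃ φ : L.Formula (Fin 1), ∀ n : ℕ, ∀ a : Fin (n + 1),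
      (@Formula.Realize L (Fin (n + 1)) (S n) (Fin 1) φ ![a] ↔ R (a : ℕ))) {α : Type} (a : α) :
    Dfn S (fun _ v => R (v a)) := by
  obtain ⟨φ, hφ⟩ := h
  have h1 : Dfn S (fun _ (v : Fin 1 → ℕ) => R (v 0)) := by
    refine ⟨φ, fun n v => ?_⟩
    have hv : v = ![v 0] := by
      funext i
      fin_cases i
      rfl
    rw [hv]
    exact hφ n (v 0)
  exact h1.rename ![a]

/-- the code of the unary predicates at `x` -/
noncomputable def ucode {k : ℕ} (U : Fin k → Set ℕ) (x : ℕ) : ℕ :=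
  mkBits k (fun i => ∃ h : i < k, x ∈ U ⟨i, h⟩)

theorem ucode_lt {k : ℕ} (U : Fin k → Set ℕ) (x : ℕ) : ucode U x < 2 ^ k := mkBits_lt _ _

theorem tb_ucode {k : ℕ} (U : Fin k → Set ℕ) (x : ℕ) (i : Fin k) : tb (ucode U x) i ↔ x ∈ U i := by
  unfold ucode
  rw [tb_mkBits]
  constructor
  · rintro ⟨_, _, h⟩
    exact h
  · intro h
    exact ⟨i.2, i.2, h⟩

theorem ucode_iff {k : ℕ} (U : Fin k → Set ℕ) (x j : ℕ) :
    ucode U x = j ↔ j < 2 ^ k ∧ ∀ i : Fin k, (tb j i ↔ x ∈ U i) := by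
  constructor
  · rintro rfl
    exact ⟨ucode_lt U x, tb_ucode U x⟩
  · rintro ⟨h1, h2⟩
    apply tb_ext
    intro c
    rcases Nat.lt_or_ge c k with hc | hc
    · rw [h2 ⟨c, hc⟩]
      exact tb_ucode U x ⟨c, hc⟩
    · have h3 : 2 ^ k ≤ 2 ^ c := Nat.pow_le_pow_right (by norm_num) hc
      have h4 := ucode_lt U x
      have g1 : ¬ tb j c := fun h => by have := tb_pow h; omega
      have g2 : ¬ tb (ucode U x) c := fun h => by have := tb_pow h; omega
      simp [g1, g2]

/-- Lemma 5.1: for every `k ≥ 1` and all unary relations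
`U₁,...,U_k` on `ℕ` there is a strict linear order `◁'` on `ℕ` such that `◁` and all
the `Uᵢ` are `FO(<,◁')`-definable in every finite prefix; moreover, if all `Uᵢ` are
`FO(Bit)`-definable in every finite prefix, then `◁'` is as well. -/
theorem encode_ordc_and_unary_predicates_into_one_linear_order
    (k : ℕ) (hk : 1 ≤ k) (U : Fin k → Set ℕ) :
    ∃ ordb : ℕ → ℕ → Prop,
      (∀ x, ¬ ordb x x) ∧
      (∀ x y z, ordb x y → ordb y z → ordb x z) ∧
      (∀ x y, x ≠ y → ordb x y ∨ ordb y x) ∧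
      (∃ φ : LPair.Formula (Fin 2),
        ∀ n : ℕ,
          letI := pairStruct ordb n
          ∀ a b : Fin (n + 1), φ.Realize ![a, b] ↔ ordc (a : ℕ) (b : ℕ)) ∧
      (∀ i : Fin k, ∃ φ : LPair.Formula (Fin 1),
        ∀ n : ℕ,
          letI := pairStruct ordb n
          ∀ a : Fin (n + 1), φ.Realize ![a] ↔ (a : ℕ) ∈ U i) ∧
      ((∀ i : Fin k, ∃ ψ : LBit.Formula (Fin 1),
          ∀ n : ℕ,
            letI := bitStruct n
            ∀ a : Fin (n + 1), ψ.Realize ![a] ↔ (a : ℕ) ∈ U i) →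
        ∃ ψ : LBit.Formula (Fin 2),
          ∀ n : ℕ,
            letI := bitStruct n
            ∀ a b : Fin (n + 1), ψ.Realize ![a, b] ↔ ordb (a : ℕ) (b : ℕ)) := by
  refine ⟨ordn (2 ^ k) (ucode U), ordn_irrefl _ _, ordn_trans _ _, ordn_total _ _, ?_, ?_, ?_⟩
  · exact dfn_two (dA_ordc _ _ (ucode_lt U) 0 1)
  · intro i
    refine dfn_one (R := fun x => x ∈ U i) ?_
    have h : Dfn (pairStruct (ordn (2 ^ k) (ucode U))) (fun _ (v : Fin 1 → ℕ) =>
        ∃ j : Fin (2 ^ k), tb j i ∧ ucode U (v 0) = j) :=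
      Dfn.exFin fun j => Dfn.and (Dfn.const _) (dA_e _ _ (ucode_lt U) 0 j.2)
    refine h.congr (fun n v _ => ?_)
    rw [← tb_ucode U (v 0) i]
    constructor
    · intro h
      exact ⟨⟨_, ucode_lt U (v 0)⟩, h, rfl⟩
    · rintro ⟨j, h1, h2⟩
      rwa [h2]
  · intro hU
    refine dfn_two (dB_ordn _ _ (ucode_lt U) ?_ 0 1)
    intro α a j
    have h : Dfn bitStruct (fun _ (v : α → ℕ) => j < 2 ^ k ∧ ∀ i : Fin k, (tb j i ↔ v a ∈ U i)) :=
      Dfn.and (Dfn.const _) (Dfn.allFin fun i => Dfn.iff (Dfn.const _)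
        (dfn_of_one (R := fun x => x ∈ U i) (hU i) a))
    exact h.congr (fun n v _ => ucode_iff U (v a) j)
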